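/- For each fixed integer ℓ ≥ 1, the quotient N2_{2ℓ}(n) / ( (−1)^ℓ · √2 · (8n)^{ℓ−1} · B_{2ℓ}(1/2) · exp(π·√(n/2)) ) tends to 1 as n → ∞; that is, N2_{2ℓ}(n) ∼ (−1)^ℓ √2 (8n)^{ℓ−1} B_{2ℓ}(1/2) exp(π√(n/2)) as n → ∞. -/

import Mathlib

open scoped Classical

/-- The M2-rank of a partition: ⌈ℓ/2⌉ − s, where ℓ is the largest part
(0 for the empty partition) and s is the number of parts. -/
def m2Rank {n : ℕ} (P : n.Partition) : ℤ :=
  (((P.parts.sup + 1) / 2 : ℕ) : ℤ) - (Multiset.card P.parts : ℤ)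

/-- A partition has no repeated odd parts. -/
def NoRepeatedOddParts {n : ℕ} (P : n.Partition) : Prop :=
  ∀ j : ℕ, Odd j → P.parts.count j ≤ 1

/-- `N2exact m n` is the number of partitions of `n` without repeated odd parts whose
M2-rank is exactly `m`. -/
noncomputable def N2exact (m : ℤ) (n : ℕ) : ℕ :=
  Nat.card {P : n.Partition // NoRepeatedOddParts P ∧ m2Rank P = m}

/-- The `2ℓ`-th M2-rank moment `N2_{2ℓ}(n) = Σ_{m∈ℤ} m^{2ℓ} N2(m,n)` (a finite sum,
formalized as a `tsum` over the discrete group ℤ). -/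
noncomputable def N2moment (ℓ n : ℕ) : ℤ :=
  ∑' m : ℤ, m ^ (2 * ℓ) * (N2exact m n : ℤ)

namespace N2

def Pset : Set (Multiset ℕ) := {M | 0 ∉ M ∧ ∀ j, Odd j → M.count j ≤ 1}

def Bx (s N : ℕ) : Set (Multiset ℕ) :=
  {M | M ∈ Pset ∧ Multiset.card M ≤ s ∧ ∀ x ∈ M, x ≤ N}

noncomputable def W (q : ℂ) (A : Set (Multiset ℕ)) : ℂ :=
  ∑' M, A.indicator (fun M => q ^ M.sum) M

lemma zero_mem_Pset : (0 : Multiset ℕ) ∈ Pset := by simp [Pset]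

lemma Bx_zero_left (N : ℕ) : Bx 0 N = {0} := by
  ext M
  simp only [Bx, Set.mem_ofPred_eq, Set.mem_singleton_iff]
  constructor
  · rintro ⟨_, h, _⟩
    exact Multiset.card_eq_zero.1 (by omega)
  · rintro rfl
    simp [zero_mem_Pset]

lemma Bx_zero_right (s : ℕ) : Bx s 0 = {0} := by
  ext M
  simp only [Bx, Set.mem_ofPred_eq, Set.mem_singleton_iff]
  constructor
  · rintro ⟨h1, _, h⟩
    refine Multiset.eq_zero_of_forall_notMem fun x hx => ?_
    have := h x hx
    have h0 : x = 0 := by omega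
    exact h1.1 (h0 ▸ hx)
  · rintro rfl
    simp [zero_mem_Pset]

lemma Bx_even (s N : ℕ) (hN : Even (N + 1)) :
    Bx (s + 1) (N + 1) = Bx (s + 1) N ∪ (fun M => (N + 1) ::ₘ M) '' Bx s (N + 1) := by
  ext M
  simp only [Bx, Pset, Set.mem_union, Set.mem_ofPred_eq, Set.mem_image]
  constructor
  · rintro ⟨⟨h0, h1⟩, h2, h3⟩
    by_cases hm : N + 1 ∈ M
    · right
      obtain ⟨M', rfl⟩ := Multiset.exists_cons_of_mem hm
      refine ⟨M', ⟨⟨fun h => h0 (Multiset.mem_cons_of_mem h), fun j hj => ?_⟩, ?_, ?_⟩, rfl⟩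
      · exact le_trans (Multiset.count_le_count_cons _ _ _) (h1 j hj)
      · simpa using h2
      · exact fun x hx => h3 x (Multiset.mem_cons_of_mem hx)
    · left
      refine ⟨⟨h0, h1⟩, h2, fun x hx => ?_⟩
      have := h3 x hx
      have : x ≠ N + 1 := fun h => hm (h ▸ hx)
      omega
  · rintro (⟨⟨h0, h1⟩, h2, h3⟩ | ⟨M', ⟨⟨h0, h1⟩, h2, h3⟩, rfl⟩)
    · exact ⟨⟨h0, h1⟩, h2, fun x hx => (h3 x hx).trans (Nat.le_succ _)⟩
    · refine ⟨⟨?_, fun j hj => ?_⟩, ?_, ?_⟩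
      · simp [h0]
      · rw [Multiset.count_cons_of_ne]
        · exact h1 j hj
        · rintro rfl
          exact (Nat.not_even_iff_odd.2 hj) hN
      · simpa using h2
      · intro x hx
        rcases Multiset.mem_cons.1 hx with rfl | hx
        · exact le_rfl
        · exact h3 x hx

lemma Bx_odd (s N : ℕ) (hN : Odd (N + 1)) :
    Bx (s + 1) (N + 1) = Bx (s + 1) N ∪ (fun M => (N + 1) ::ₘ M) '' Bx s N := by
  ext M
  simp only [Bx, Pset, Set.mem_union, Set.mem_ofPred_eq, Set.mem_image]
  constructor
  · rintro ⟨⟨h0, h1⟩, h2, h3⟩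
    by_cases hm : N + 1 ∈ M
    · right
      obtain ⟨M', rfl⟩ := Multiset.exists_cons_of_mem hm
      refine ⟨M', ⟨⟨fun h => h0 (Multiset.mem_cons_of_mem h), fun j hj => ?_⟩, ?_, ?_⟩, rfl⟩
      · exact le_trans (Multiset.count_le_count_cons _ _ _) (h1 j hj)
      · simpa using h2
      · intro x hx
        have := h3 x (Multiset.mem_cons_of_mem hx)
        have h4 := h1 (N + 1) hN
        rw [Multiset.count_cons_self] at h4
        have h5 : N + 1 ∉ M' := Multiset.count_eq_zero.1 (by omega)
        have : x ≠ N + 1 := fun h => h5 (h ▸ hx)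
        omega
    · left
      refine ⟨⟨h0, h1⟩, h2, fun x hx => ?_⟩
      have := h3 x hx
      have : x ≠ N + 1 := fun h => hm (h ▸ hx)
      omega
  · rintro (⟨⟨h0, h1⟩, h2, h3⟩ | ⟨M', ⟨⟨h0, h1⟩, h2, h3⟩, rfl⟩)
    · exact ⟨⟨h0, h1⟩, h2, fun x hx => (h3 x hx).trans (Nat.le_succ _)⟩
    · refine ⟨⟨?_, fun j hj => ?_⟩, ?_, ?_⟩
      · simp [h0]
      · by_cases hj' : j = N + 1
        · subst hj'
          rw [Multiset.count_cons_self, Multiset.count_eq_zero.2]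
          intro h
          have := h3 _ h
          omega
        · rw [Multiset.count_cons_of_ne hj']
          exact h1 j hj
      · simpa using h2
      · intro x hx
        rcases Multiset.mem_cons.1 hx with rfl | hx
        · exact le_rfl
        · exact (h3 x hx).trans (Nat.le_succ _)

lemma Bx_mono_right (s N : ℕ) : Bx s N ⊆ Bx s (N + 1) := fun _ h =>
  ⟨h.1, h.2.1, fun x hx => (h.2.2 x hx).trans (Nat.le_succ _)⟩

lemma Bx_mono_left (s N : ℕ) : Bx s N ⊆ Bx (s + 1) N := fun _ h =>
  ⟨h.1, h.2.1.trans (Nat.le_succ _), h.2.2⟩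

lemma Bx_sub (s N : ℕ) :
    Bx (s + 1) (N + 1) ⊆ Bx (s + 1) N ∪ (fun M => (N + 1) ::ₘ M) '' Bx s (N + 1) := by
  rcases Nat.even_or_odd (N + 1) with h | h
  · rw [Bx_even s N h]
  · rw [Bx_odd s N h]
    exact Set.union_subset_union le_rfl (Set.image_mono (Bx_mono_right s N))

lemma Bx_finite (s N : ℕ) : (Bx s N).Finite := by
  induction s generalizing N with
  | zero => rw [Bx_zero_left]; exact Set.finite_singleton _
  | succ s ihs =>
    induction N with
    | zero => rw [Bx_zero_right]; exact Set.finite_singleton _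
    | succ N ih => exact ((ih).union ((ihs _).image _)).subset (Bx_sub s N)

lemma cons_inj (a : ℕ) : Function.Injective (fun M : Multiset ℕ => a ::ₘ M) :=
  fun _ _ h => (Multiset.cons_inj_right a).1 h

lemma disj_Bx (s N : ℕ) (A : Set (Multiset ℕ)) :
    Disjoint (Bx (s + 1) N) ((fun M => (N + 1) ::ₘ M) '' A) := by
  rw [Set.disjoint_left]
  rintro M h ⟨M', _, rfl⟩
  have := h.2.2 (N + 1) (Multiset.mem_cons_self _ _)
  omega

/-- weight of an image under cons -/
lemma tsum_image_cons {R : Type*} [NormedField R] (q : R) (a : ℕ) (A : Set (Multiset ℕ)) :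
    ∑' M, ((fun M => a ::ₘ M) '' A).indicator (fun M => q ^ M.sum) M
      = q ^ a * ∑' M, A.indicator (fun M => q ^ M.sum) M := by
  rw [← tsum_subtype, ← tsum_subtype, tsum_image (fun M : Multiset ℕ => q ^ M.sum)
    ((cons_inj a).injOn), ← tsum_mul_left]
  congr 1
  ext M
  simp [pow_add]

lemma summable_of_finite {R : Type*} [NormedField R] (q : R) {A : Set (Multiset ℕ)} (hA : A.Finite) :
    Summable (A.indicator (fun M => q ^ M.sum)) :=
  summable_of_hasFiniteSupport (hA.subset (Set.support_indicator_subset))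

lemma bound_fin (ρ : ℝ) (h0 : 0 ≤ ρ) (h1 : ρ < 1) (s N : ℕ) :
    ∑' M, (Bx s N).indicator (fun M => ρ ^ M.sum) M ≤
      ∏ j ∈ Finset.range N, (1 - ρ ^ (j + 1))⁻¹ := by
  have hpos : ∀ j : ℕ, 0 < 1 - ρ ^ (j + 1) := fun j => by
    have := pow_lt_one₀ h0 h1 (show j + 1 ≠ 0 by omega); linarith
  have h1' : ∀ (N : ℕ), (1:ℝ) ≤ ∏ j ∈ Finset.range N, (1 - ρ ^ (j + 1))⁻¹ := by
    intro N
    refine le_trans (le_of_eq (Finset.prod_const_one (s := Finset.range N)).symm) ?_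
    refine Finset.prod_le_prod (fun _ _ => zero_le_one) fun j _ => ?_
    refine (one_le_inv₀ (hpos j)).2 ?_
    have := pow_nonneg h0 (j + 1)
    linarith
  have base : ∑' M : Multiset ℕ, ({0} : Set (Multiset ℕ)).indicator (fun M => ρ ^ M.sum) M = 1 := by
    rw [← tsum_subtype]; simp
  have hnn : ∀ A : Set (Multiset ℕ), ∀ M, 0 ≤ A.indicator (fun M => ρ ^ M.sum) M :=
    fun A M => Set.indicator_nonneg (fun M _ => pow_nonneg h0 _) M
  cases s with
  | zero => rw [Bx_zero_left, base]; exact h1' N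
  | succ s =>
    induction N with
    | zero => rw [Bx_zero_right, base]; exact h1' 0
    | succ N ih =>
      rw [Finset.prod_range_succ, ← div_eq_mul_inv, le_div_iff₀ (hpos N)]
      refine le_trans ?_ ih
      have key : ∑' M, (Bx (s+1) (N+1)).indicator (fun M => ρ ^ M.sum) M ≤
          ∑' M, (Bx (s+1) N).indicator (fun M => ρ ^ M.sum) M +
          ρ ^ (N + 1) * ∑' M, (Bx (s+1) (N+1)).indicator (fun M => ρ ^ M.sum) M := by
        rw [← tsum_image_cons, ← (summable_of_finite ρ (Bx_finite _ _)).tsum_add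
          (summable_of_finite ρ ((Bx_finite _ _).image _))]
        refine Summable.tsum_le_tsum (fun M => ?_) (summable_of_finite ρ (Bx_finite _ _))
          ((summable_of_finite ρ (Bx_finite _ _)).add
          (summable_of_finite ρ ((Bx_finite _ _).image _)))
        by_cases hM : M ∈ Bx (s+1) (N+1)
        · rcases Bx_sub s N hM with h | ⟨M', h, h'⟩
          · have := hnn ((fun M => (N + 1) ::ₘ M) '' Bx (s+1) (N + 1)) M
            rw [Set.indicator_of_mem hM, Set.indicator_of_mem h]
            linarith
          · have := hnn (Bx (s+1) N) M
            have h2 : M ∈ ((fun M => (N + 1) ::ₘ M) '' Bx (s+1) (N + 1)) :=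
              ⟨M', Bx_mono_left _ _ h, h'⟩
            rw [Set.indicator_of_mem hM, Set.indicator_of_mem h2]
            linarith
        · rw [Set.indicator_of_notMem hM]
          exact add_nonneg (hnn _ _) (hnn _ _)
      linarith

lemma bound_prod (ρ : ℝ) (h0 : 0 ≤ ρ) (h1 : ρ < 1) (N : ℕ) :
    ∏ j ∈ Finset.range N, (1 - ρ ^ (j + 1))⁻¹ ≤ Real.exp ((1 - ρ)⁻¹ * (1 - ρ)⁻¹) := by
  have hpos : ∀ j : ℕ, 0 < 1 - ρ ^ (j + 1) := fun j => by
    have := pow_lt_one₀ h0 h1 (show j + 1 ≠ 0 by omega); linarith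
  have hr : 0 < 1 - ρ := by linarith
  calc ∏ j ∈ Finset.range N, (1 - ρ ^ (j + 1))⁻¹
      ≤ ∏ j ∈ Finset.range N, Real.exp ((1 - ρ)⁻¹ * ρ ^ j) := by
        refine Finset.prod_le_prod (fun j _ => (inv_pos.2 (hpos j)).le) fun j _ => ?_
        have h2 : (1 - ρ ^ (j + 1))⁻¹ ≤ 1 + (1 - ρ)⁻¹ * ρ ^ j := by
          rw [inv_le_iff_one_le_mul₀ (hpos j)]
          have h3 : ρ ^ (j+1) ≤ ρ ^ j := pow_le_pow_of_le_one h0 h1.le (Nat.le_succ _)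
          have h4 : ρ ^ (j+1) ≤ ρ := pow_le_of_le_one h0 h1.le (Nat.succ_ne_zero j)
          have h5 : 1 ≤ (1 - ρ)⁻¹ * (1 - ρ ^ (j+1)) := by
            rw [← div_eq_inv_mul, one_le_div hr]; linarith
          have h6 : 0 ≤ ρ ^ j := pow_nonneg h0 _
          nlinarith
        refine h2.trans ?_
        have := Real.add_one_le_exp ((1 - ρ)⁻¹ * ρ ^ j)
        linarith
    _ = Real.exp (∑ j ∈ Finset.range N, (1 - ρ)⁻¹ * ρ ^ j) := (Real.exp_sum _ _).symm
    _ ≤ _ := by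
        apply Real.exp_le_exp.2
        rw [← Finset.mul_sum]
        refine mul_le_mul_of_nonneg_left ?_ (inv_pos.2 hr).le
        rw [← tsum_geometric_of_lt_one h0 h1]
        exact (summable_geometric_of_lt_one h0 h1).sum_le_tsum _ (fun _ _ => pow_nonneg h0 _)

lemma exists_Bx (M : Multiset ℕ) (hM : M ∈ Pset) : M ∈ Bx M.sum M.sum := by
  refine ⟨hM, ?_, fun x hx => Multiset.le_sum_of_mem hx⟩
  have h := Multiset.card_nsmul_le_sum (s := M) (a := 1) (fun x hx => by
    rcases Nat.eq_zero_or_pos x with h | h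
    · exact absurd (h ▸ hx) hM.1
    · exact h)
  simpa using h

lemma Bx_mono {s s' N N' : ℕ} (h : s ≤ s') (h' : N ≤ N') : Bx s N ⊆ Bx s' N' := fun _ hM =>
  ⟨hM.1, hM.2.1.trans h, fun x hx => (hM.2.2 x hx).trans h'⟩

lemma summable_Pset (ρ : ℝ) (h0 : 0 ≤ ρ) (h1 : ρ < 1) :
    Summable (Pset.indicator (fun M => ρ ^ M.sum)) := by
  refine summable_of_sum_le (c := Real.exp ((1 - ρ)⁻¹ * (1 - ρ)⁻¹))
    (fun M => Set.indicator_nonneg (fun M _ => pow_nonneg h0 _) M) fun u => ?_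
  set K := u.sup (fun M => M.sum)
  have h2 : ∑ M ∈ u, Pset.indicator (fun M => ρ ^ M.sum) M =
      ∑ M ∈ u, (Bx K K).indicator (fun M => ρ ^ M.sum) M := by
    refine Finset.sum_congr rfl fun M hM => ?_
    by_cases hP : M ∈ Pset
    · have hK : M.sum ≤ K := Finset.le_sup (f := fun M : Multiset ℕ => M.sum) hM
      rw [Set.indicator_of_mem hP, Set.indicator_of_mem (Bx_mono hK hK (exists_Bx M hP))]
    · rw [Set.indicator_of_notMem hP, Set.indicator_of_notMem (fun h => hP h.1)]
  rw [h2]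
  refine le_trans ?_ ((bound_fin ρ h0 h1 K K).trans (bound_prod ρ h0 h1 K))
  exact (summable_of_finite ρ (Bx_finite _ _)).sum_le_tsum _
    (fun M _ => Set.indicator_nonneg (fun M _ => pow_nonneg h0 _) M)

lemma norm_ind (q : ℂ) (A : Set (Multiset ℕ)) (M : Multiset ℕ) :
    ‖A.indicator (fun M => q ^ M.sum) M‖ = A.indicator (fun M => ‖q‖ ^ M.sum) M := by
  rw [Set.indicator_apply, Set.indicator_apply]
  split_ifs <;> simp

lemma summable_W {q : ℂ} (hq : ‖q‖ < 1) {A : Set (Multiset ℕ)} (hA : A ⊆ Pset) :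
    Summable (A.indicator (fun M => q ^ M.sum)) := by
  refine Summable.of_norm_bounded (summable_Pset ‖q‖ (norm_nonneg _) hq) fun M => ?_
  rw [norm_ind]
  exact Set.indicator_le_indicator_of_subset hA (fun M => pow_nonneg (norm_nonneg _) _) M

lemma W_union {q : ℂ} (hq : ‖q‖ < 1) {A B : Set (Multiset ℕ)} (hA : A ⊆ Pset) (hB : B ⊆ Pset)
    (hd : Disjoint A B) : W q (A ∪ B) = W q A + W q B := by
  rw [W, W, W, ← (summable_W hq hA).tsum_add (summable_W hq hB), Set.indicator_union_of_disjoint hd]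

lemma W_cons (q : ℂ) (a : ℕ) (A : Set (Multiset ℕ)) :
    W q ((fun M => a ::ₘ M) '' A) = q ^ a * W q A := tsum_image_cons q a A

lemma W_zero (q : ℂ) : W q {0} = 1 := by
  rw [W, ← tsum_subtype]; simp

lemma W_Bx_even {q : ℂ} (hq : ‖q‖ < 1) (s N : ℕ) (hN : Even (N + 1)) :
    W q (Bx (s + 1) (N + 1)) = W q (Bx (s + 1) N) + q ^ (N + 1) * W q (Bx s (N + 1)) := by
  have h := Bx_even s N hN
  rw [← W_cons, ← W_union hq (fun M h => h.1) _ (disj_Bx _ _ _), h]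
  exact (Set.subset_union_right.trans h.symm.subset).trans (fun M h => h.1)

lemma W_Bx_odd {q : ℂ} (hq : ‖q‖ < 1) (s N : ℕ) (hN : Odd (N + 1)) :
    W q (Bx (s + 1) (N + 1)) = W q (Bx (s + 1) N) + q ^ (N + 1) * W q (Bx s N) := by
  have h := Bx_odd s N hN
  rw [← W_cons, ← W_union hq (fun M h => h.1) _ (disj_Bx _ _ _), h]
  exact (Set.subset_union_right.trans h.symm.subset).trans (fun M h => h.1)

noncomputable def b (q : ℂ) (s L : ℕ) : ℂ := W q (Bx s (2 * L))

lemma b_zero_left (q : ℂ) (L : ℕ) : b q 0 L = 1 := by rw [b, Bx_zero_left, W_zero]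
lemma b_zero_right (q : ℂ) (s : ℕ) : b q s 0 = 1 := by rw [b, mul_zero, Bx_zero_right, W_zero]

lemma b_row {q : ℂ} (hq : ‖q‖ < 1) (s L : ℕ) :
    b q (s + 1) (L + 1) = b q (s + 1) L + q ^ (2 * L + 2) * b q s (L + 1)
      + q ^ (2 * L + 1) * b q s L := by
  have h1 := W_Bx_even hq s (2 * L + 1) ⟨L + 1, by ring⟩
  have h2 := W_Bx_odd hq s (2 * L) ⟨L, by ring⟩
  simp only [b]
  rw [show 2 * (L + 1) = 2 * L + 1 + 1 by ring, h1, h2]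
  ring

lemma b_col {q : ℂ} (hq : ‖q‖ < 1) (s L : ℕ) :
    b q (s + 1) (L + 1) = b q s (L + 1) + q ^ (2 * s + 2) * b q (s + 1) L
      + q ^ (2 * s + 1) * b q s L := by
  induction s generalizing L with
  | zero =>
    induction L with
    | zero =>
      rw [b_row hq]; simp only [b_zero_left, b_zero_right]
    | succ L ih =>
      rw [b_row hq 0 (L + 1)]
      nth_rw 1 [ih]
      rw [b_row hq 0 L]
      simp only [b_zero_left]
      ring
  | succ s ihs =>
    induction L with
    | zero =>
      have h1 := b_row hq (s + 1) 0
      have h2 := b_row hq s 0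
      have h3 := ihs 0
      simp only [b_zero_right] at *
      linear_combination h1 - h2 + q ^ 2 * h3
    | succ L ih =>
      have e1 := b_row hq (s + 1) (L + 1)
      have e2 := b_row hq s (L + 1)
      have e3 := b_row hq (s + 1) L
      have e4 := b_row hq s L
      have i1 := ihs (L + 1)
      have i2 := ihs L
      linear_combination e1 - e2 - q ^ (2 * (s + 1) + 2) * e3 - q ^ (2 * (s + 1) + 1) * e4 + ih
        + q ^ (2 * (L + 1) + 2) * i1 + q ^ (2 * (L + 1) + 1) * i2

lemma b_symm {q : ℂ} (hq : ‖q‖ < 1) (s L : ℕ) : b q s L = b q L s := by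
  induction s generalizing L with
  | zero => rw [b_zero_left, b_zero_right]
  | succ s ihs =>
    induction L with
    | zero => rw [b_zero_left, b_zero_right]
    | succ L ih =>
      rw [b_row hq, b_col hq, ih, ihs, ihs]

end N2

namespace N2

lemma hasSum_congr' {ι : Type*} {f g : ι → ℂ} {a : ℂ} (h : ∀ i, f i = g i) :
    HasSum f a ↔ HasSum g a := by
  rw [funext h]

def lm (M : Multiset ℕ) : ℕ := (M.sup + 1) / 2

lemma lm_le (M : Multiset ℕ) (L : ℕ) : lm M ≤ L ↔ ∀ x ∈ M, x ≤ 2 * L := by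
  rw [← Multiset.sup_le, lm]
  omega

lemma lm_zero : lm 0 = 0 := by simp [lm]

lemma lm_pos {M : Multiset ℕ} (hM : M ∈ Pset) (h : lm M = 0) : M = 0 := by
  refine Multiset.eq_zero_of_forall_notMem fun x hx => ?_
  have := (lm_le M 0).1 h.le x hx
  have h0 : x = 0 := by omega
  exact hM.1 (h0 ▸ hx)

lemma mem_Bx {M : Multiset ℕ} {s L : ℕ} :
    M ∈ Bx s (2 * L) ↔ M ∈ Pset ∧ Multiset.card M ≤ s ∧ lm M ≤ L := by
  rw [lm_le]; rfl

def Rge (m : ℕ) : Set (Multiset ℕ) := {M | M ∈ Pset ∧ M ≠ 0 ∧ Multiset.card M + m ≤ lm M}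
def Rle (m : ℕ) : Set (Multiset ℕ) := {M | M ∈ Pset ∧ lm M ≤ Multiset.card M + m}
def Rneg (m : ℕ) : Set (Multiset ℕ) := {M | M ∈ Pset ∧ lm M + m ≤ Multiset.card M}

lemma hasSum_fiber {q : ℂ} (hq : ‖q‖ < 1) {A : Set (Multiset ℕ)} (hA : A ⊆ Pset)
    (f : Multiset ℕ → ℕ) : HasSum (fun k => W q {M | M ∈ A ∧ f M = k}) (W q A) := by
  have h := (summable_W hq hA).hasSum.tsum_fiberwise f
  refine (hasSum_congr' fun k => ?_).mpr h
  rw [W, tsum_subtype (f ⁻¹' {k})]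
  congr 1
  ext M
  rw [Set.indicator_apply, Set.indicator_apply, Set.indicator_apply]
  by_cases h1 : M ∈ A <;> by_cases h2 : f M = k <;> simp [h1, h2]

lemma W_diff {q : ℂ} (hq : ‖q‖ < 1) {A B : Set (Multiset ℕ)} (hAB : A ⊆ B) (hB : B ⊆ Pset) :
    W q (B \ A) = W q B - W q A := by
  rw [eq_sub_iff_add_eq, ← W_union hq (Set.sdiff_subset.trans hB) (hAB.trans hB)
    Set.disjoint_sdiff_left, Set.sdiff_union_of_subset hAB]

lemma Bx_Pset (s N : ℕ) : Bx s N ⊆ Pset := fun _ h => h.1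

lemma W_empty (q : ℂ) : W q ∅ = 0 := by simp [W]

noncomputable def FF (ρ : ℝ) : ℝ := ∑' M, Pset.indicator (fun M => ρ ^ M.sum) M

lemma W_bound {q : ℂ} (hq : ‖q‖ < 1) {A : Set (Multiset ℕ)} (hA : A ⊆ Pset) :
    ‖W q A‖ ≤ FF ‖q‖ := by
  have hs := summable_Pset ‖q‖ (norm_nonneg _) hq
  refine tsum_of_norm_bounded hs.hasSum fun M => ?_
  rw [norm_ind]
  exact Set.indicator_le_indicator_of_subset hA (fun M => pow_nonneg (norm_nonneg _) _) M

lemma card_pos' {M : Multiset ℕ} (h : M ≠ 0) : 1 ≤ Multiset.card M :=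
  Multiset.card_pos.2 h

lemma hasSum_Rge {q : ℂ} (hq : ‖q‖ < 1) (m : ℕ) :
    HasSum (fun t => b q (t + 1) (t + m + 1) - b q (t + 1) (t + m)) (W q (Rge m)) := by
  have h := hasSum_fiber hq (A := Rge m) (fun _ h => h.1) lm
  rw [← hasSum_nat_add_iff' (m + 1)] at h
  rw [Finset.sum_eq_zero, sub_zero] at h
  · refine (hasSum_congr' fun t => ?_).mpr h
    rw [b, b, ← W_diff hq _ (Bx_Pset _ _)]
    · congr 1
      ext M
      simp only [Set.mem_sdiff, mem_Bx, Rge, Set.mem_ofPred_eq]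
      constructor
      · rintro ⟨⟨h1, h2, h3⟩, h4⟩
        have h5 : lm M = t + (m + 1) := by
          by_contra h6
          exact h4 ⟨h1, h2, by omega⟩
        refine ⟨⟨h1, ?_, by omega⟩, h5⟩
        rintro rfl
        rw [lm_zero] at h5
        omega
      · rintro ⟨⟨h1, h2, h3⟩, h4⟩
        refine ⟨⟨h1, by omega, by omega⟩, fun h5 => by have := h5.2.2; omega⟩
    · exact Bx_mono le_rfl (by omega)
  · intro k hk
    rw [Finset.mem_range] at hk
    convert W_empty q
    ext M
    simp only [Rge, Set.mem_ofPred_eq, Set.mem_empty_iff_false, iff_false]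
    rintro ⟨⟨h1, h2, h3⟩, h4⟩
    have := card_pos' h2
    omega

lemma hasSum_Rneg {q : ℂ} (hq : ‖q‖ < 1) (m : ℕ) (hm : 1 ≤ m) :
    HasSum (fun t => b q (t + m + 1) (t + 1) - b q (t + m) (t + 1)) (W q (Rneg m)) := by
  have h := hasSum_fiber hq (A := Rneg m) (fun _ h => h.1) Multiset.card
  rw [← hasSum_nat_add_iff' (m + 1)] at h
  rw [Finset.sum_eq_zero, sub_zero] at h
  · refine (hasSum_congr' fun t => ?_).mpr h
    rw [b, b, ← W_diff hq _ (Bx_Pset _ _)]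
    · congr 1
      ext M
      simp only [Set.mem_sdiff, mem_Bx, Rneg, Set.mem_ofPred_eq]
      constructor
      · rintro ⟨⟨h1, h2, h3⟩, h4⟩
        have h5 : Multiset.card M = t + (m + 1) := by
          by_contra h6
          exact h4 ⟨h1, by omega, by omega⟩
        exact ⟨⟨h1, by omega⟩, h5⟩
      · rintro ⟨⟨h1, h2⟩, h4⟩
        refine ⟨⟨h1, by omega, by omega⟩, fun h5 => by have := h5.2.1; omega⟩
    · exact Bx_mono (by omega) le_rfl
  · intro k hk
    rw [Finset.mem_range] at hk
    convert W_empty q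
    ext M
    simp only [Rneg, Set.mem_ofPred_eq, Set.mem_empty_iff_false, iff_false]
    rintro ⟨⟨h1, h2⟩, h4⟩
    have := lm_pos h1 (by omega)
    subst this
    simp at h4
    simp at h2
    omega

lemma W_symm {q : ℂ} (hq : ‖q‖ < 1) (m : ℕ) (hm : 1 ≤ m) : W q (Rneg m) = W q (Rge m) := by
  refine (hasSum_Rneg hq m hm).unique ?_
  refine (hasSum_congr' fun t => ?_).mpr (hasSum_Rge hq m)
  rw [b_symm hq, b_symm hq (t + m)]

lemma hasSum_Rle {q : ℂ} (hq : ‖q‖ < 1) (m : ℕ) :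
    HasSum (fun t => b q (t + 1) (t + 1 + m) - b q t (t + 1 + m)) (W q (Rle m) - 1) := by
  have h := hasSum_fiber hq (A := Rle m) (fun _ h => h.1) Multiset.card
  rw [← hasSum_nat_add_iff' 1] at h
  rw [Finset.sum_range_one] at h
  have h0 : W q {M | M ∈ Rle m ∧ Multiset.card M = 0} = 1 := by
    rw [← W_zero q]
    congr 1
    ext M
    simp only [Rle, Set.mem_ofPred_eq, Set.mem_singleton_iff, Multiset.card_eq_zero]
    constructor
    · exact fun h => h.2
    · rintro rfl
      simp [zero_mem_Pset, lm_zero]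
  rw [h0] at h
  refine (hasSum_congr' fun t => ?_).mpr h
  rw [b, b, ← W_diff hq _ (Bx_Pset _ _)]
  · congr 1
    ext M
    simp only [Set.mem_sdiff, mem_Bx, Rle, Set.mem_ofPred_eq]
    constructor
    · rintro ⟨⟨h1, h2, h3⟩, h4⟩
      have h5 : Multiset.card M = t + 1 := by
        by_contra h6
        exact h4 ⟨h1, by omega, by omega⟩
      exact ⟨⟨h1, by omega⟩, h5⟩
    · rintro ⟨⟨h1, h2⟩, h4⟩
      refine ⟨⟨h1, by omega, by omega⟩, fun h5 => by have := h5.2.1; omega⟩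
  · exact Bx_mono (by omega) le_rfl

lemma summable_qb {q : ℂ} (hq : ‖q‖ < 1) (c d : ℕ) (f g : ℕ → ℕ) :
    Summable (fun t => q ^ (2 * t + c) * b q (f t) (g t) * q ^ d) := by
  have h2 : ‖q‖ ^ 2 < 1 := pow_lt_one₀ (norm_nonneg _) hq two_ne_zero
  have := (summable_geometric_of_lt_one (by positivity) h2).mul_right (‖q‖ ^ c * FF ‖q‖ * ‖q‖ ^ d)
  refine Summable.of_norm_bounded this fun t => ?_
  rw [norm_mul, norm_mul, norm_pow, norm_pow, pow_add, pow_mul]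
  have := W_bound hq (Bx_Pset (f t) (2 * g t))
  rw [← mul_assoc, ← mul_assoc]
  gcongr
  exact this

lemma dyson {q : ℂ} (hq : ‖q‖ < 1) (m : ℕ) :
    W q (Rge m) = q ^ (2 * m + 1) * W q (Rle (m + 1)) := by
  have h1 := hasSum_Rge hq m
  have h2 := hasSum_Rle hq (m + 1)
  have hv := (summable_qb hq 0 0 (fun t => t) (fun t => t + m)).hasSum
  have hu := (summable_qb hq 1 0 (fun t => t) (fun t => t + m + 1)).hasSum
  have hv' := hv
  rw [← hasSum_nat_add_iff' 1] at hv'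
  have e2 := h2.unique (by
    refine (hasSum_congr' fun t => ?_).mpr (hu.add hv')
    rw [show t + 1 + (m + 1) = (t + m + 1) + 1 by ring, b_col hq,
      show t + 1 + m = t + m + 1 by ring]
    ring)
  have e1 := h1.unique (by
    refine (hasSum_congr' fun t => ?_).mpr ((hu.add hv).mul_left (q ^ (2 * m + 1)))
    rw [b_row hq]
    ring)
  rw [e1]
  rw [Finset.sum_range_one, b_zero_left] at e2
  linear_combination q ^ (2 * m + 1) * (-e2)

lemma W_split {q : ℂ} (hq : ‖q‖ < 1) (m : ℕ) :
    W q Pset = W q (Rle m) + W q (Rge (m + 1)) := by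
  rw [← W_union hq (fun _ h => h.1) (fun _ h => h.1)]
  · congr 1
    ext M
    simp only [Rle, Rge, Set.mem_union, Set.mem_ofPred_eq]
    constructor
    · intro h
      by_cases h' : lm M ≤ Multiset.card M + m
      · exact Or.inl ⟨h, h'⟩
      · refine Or.inr ⟨h, ?_, by omega⟩
        rintro rfl
        simp [lm_zero] at h'
    · rintro (h | h) <;> exact h.1
  · rw [Set.disjoint_left]
    rintro M ⟨_, h1⟩ ⟨_, _, h2⟩
    omega

lemma W_split0 {q : ℂ} (hq : ‖q‖ < 1) :
    W q Pset = 1 + W q (Rge 0) + W q (Rneg 1) := by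
  have h0 : ({0} : Set (Multiset ℕ)) ⊆ Pset := by
    rintro _ rfl; exact zero_mem_Pset
  rw [← W_zero q, ← W_union hq h0 (fun _ h => h.1), ← W_union hq _ (fun _ h => h.1)]
  · congr 1
    ext M
    simp only [Rneg, Rge, Set.mem_union, Set.mem_ofPred_eq, Set.mem_singleton_iff]
    constructor
    · intro h
      by_cases h0 : M = 0
      · exact Or.inl (Or.inl h0)
      by_cases h' : Multiset.card M + 0 ≤ lm M
      · exact Or.inl (Or.inr ⟨h, h0, h'⟩)
      · exact Or.inr ⟨h, by omega⟩
    · rintro ((h | h) | h)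
      · rw [h]; exact zero_mem_Pset
      · exact h.1
      · exact h.1
  · rw [Set.disjoint_left]
    rintro M (rfl | ⟨_, _, h1⟩) ⟨_, h2⟩
    · simp at h2
    · omega
  · exact Set.union_subset h0 (fun _ h => h.1)
  · rw [Set.disjoint_left]
    rintro M rfl ⟨_, h, _⟩
    exact h rfl

noncomputable def S (q : ℂ) (m : ℕ) : ℂ := ∑' j : ℕ, (-1) ^ j * q ^ ((j + 1) * (2 * j + 1 + 2 * m))

lemma term_bound {q : ℂ} (hq : ‖q‖ < 1) (m j : ℕ) :
    ‖(-1 : ℂ) ^ j * q ^ ((j + 1) * (2 * j + 1 + 2 * m))‖ ≤ ‖q‖ ^ j := by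
  rw [norm_mul, norm_pow, norm_pow, norm_neg, norm_one, one_pow, one_mul]
  refine pow_le_pow_of_le_one (norm_nonneg _) hq.le ?_
  nlinarith [Nat.zero_le (j * m), Nat.zero_le (j * j)]

lemma S_summable {q : ℂ} (hq : ‖q‖ < 1) (m : ℕ) :
    Summable (fun j : ℕ => (-1 : ℂ) ^ j * q ^ ((j + 1) * (2 * j + 1 + 2 * m))) :=
  Summable.of_norm_bounded (summable_geometric_of_lt_one (norm_nonneg _) hq) (term_bound hq m)

lemma S_bound {q : ℂ} (hq : ‖q‖ < 1) (m : ℕ) : ‖S q m‖ ≤ (1 - ‖q‖)⁻¹ :=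
  tsum_of_norm_bounded (hasSum_geometric_of_lt_one (norm_nonneg _) hq) (term_bound hq m)

lemma S_rec {q : ℂ} (hq : ‖q‖ < 1) (m : ℕ) :
    S q m = q ^ (2 * m + 1) * (1 - S q (m + 2)) := by
  rw [S, (S_summable hq m).tsum_eq_zero_add, mul_sub, S, ← tsum_mul_left, sub_eq_add_neg, ← tsum_neg]
  congr 1
  · ring
  · congr 1
    ext j
    ring

lemma W_Rge {q : ℂ} (hq : ‖q‖ < 1) (m : ℕ) :
    W q (Rge m) = W q Pset * S q m := by
  have hrec : ∀ m, W q (Rge m) - W q Pset * S q m =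
      - q ^ (2 * m + 1) * (W q (Rge (m + 2)) - W q Pset * S q (m + 2)) := by
    intro m
    have h1 := dyson hq m
    have h2 := W_split hq (m + 1)
    have h3 := S_rec hq m
    rw [h1, h3]
    linear_combination (-q ^ (2 * m + 1)) * h2
  set C := FF ‖q‖ + FF ‖q‖ * (1 - ‖q‖)⁻¹
  have hb : ∀ m, ‖W q (Rge m) - W q Pset * S q m‖ ≤ C := by
    intro m
    refine (norm_sub_le _ _).trans (add_le_add (W_bound hq fun _ h => h.1) ?_)
    rw [norm_mul]
    exact mul_le_mul (W_bound hq le_rfl) (S_bound hq m) (norm_nonneg _)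
      ((norm_nonneg _).trans (W_bound hq (le_refl Pset)))
  have hk : ∀ k m : ℕ, ‖W q (Rge m) - W q Pset * S q m‖ ≤ ‖q‖ ^ k * C := by
    intro k
    induction k with
    | zero => intro m; simpa using hb m
    | succ k ih =>
      intro m
      rw [hrec, norm_mul, norm_neg, norm_pow, pow_succ' ‖q‖ k, mul_assoc]
      refine mul_le_mul ?_ (ih _) (norm_nonneg _) (norm_nonneg _)
      exact pow_le_of_le_one (norm_nonneg _) hq.le (by omega)
  have hlim : Filter.Tendsto (fun k : ℕ => ‖q‖ ^ k * C) Filter.atTop (nhds (0 * C)) :=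
    (tendsto_pow_atTop_nhds_zero_of_lt_one (norm_nonneg _) hq).mul_const C
  have h0 := ge_of_tendsto' hlim (fun k => hk k m)
  rw [zero_mul] at h0
  exact sub_eq_zero.1 (norm_le_zero_iff.1 h0)

lemma W_theta {q : ℂ} (hq : ‖q‖ < 1) :
    W q Pset * (1 - S q 1 - q * (1 - S q 2)) = 1 := by
  have h1 := W_split0 hq
  rw [W_symm hq 1 le_rfl, W_Rge hq 1, dyson hq 0] at h1
  have h2 := W_split hq 1
  rw [W_Rge hq 2] at h2
  simp only [zero_add, mul_zero, pow_one] at h1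
  linear_combination h1 - q * h2

end N2

namespace N2

lemma tendsto_W {q : ℂ} (hq : ‖q‖ < 1) {A : Set (Multiset ℕ)} (B : ℕ → Set (Multiset ℕ))
    (hB : ∀ k, B k ⊆ Pset) (h : ∀ M, ∀ᶠ k in Filter.atTop, (M ∈ B k ↔ M ∈ A)) :
    Filter.Tendsto (fun k => W q (B k)) Filter.atTop (nhds (W q A)) := by
  refine tendsto_tsum_of_dominated_convergence (summable_Pset ‖q‖ (norm_nonneg _) hq)
    (fun M => ?_) (Filter.Eventually.of_forall fun k M => ?_)
  · refine Filter.Tendsto.congr' ?_ tendsto_const_nhds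
    filter_upwards [h M] with k hk
    rw [Set.indicator_apply, Set.indicator_apply]
    simp only [hk]
  · rw [norm_ind]
    exact Set.indicator_le_indicator_of_subset (hB k) (fun M => pow_nonneg (norm_nonneg _) _) M

def Ax (N : ℕ) : Set (Multiset ℕ) := {M | M ∈ Pset ∧ ∀ x ∈ M, x ≤ N}

lemma tendsto_Bx {q : ℂ} (hq : ‖q‖ < 1) (N : ℕ) :
    Filter.Tendsto (fun s => W q (Bx s N)) Filter.atTop (nhds (W q (Ax N))) := by
  refine tendsto_W hq _ (fun k => Bx_Pset _ _) fun M => ?_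
  filter_upwards [Filter.eventually_ge_atTop (Multiset.card M)] with k hk
  exact ⟨fun h => ⟨h.1, h.2.2⟩, fun h => ⟨h.1, hk, h.2⟩⟩

lemma tendsto_Ax {q : ℂ} (hq : ‖q‖ < 1) :
    Filter.Tendsto (fun N => W q (Ax (2 * N))) Filter.atTop (nhds (W q Pset)) := by
  refine tendsto_W hq _ (fun k _ h => h.1) fun M => ?_
  filter_upwards [Filter.eventually_ge_atTop M.sum] with k hk
  exact ⟨fun h => h.1, fun h => ⟨h, fun x hx => (Multiset.le_sum_of_mem hx).trans (by omega)⟩⟩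

lemma Ax_rec {q : ℂ} (hq : ‖q‖ < 1) (N : ℕ) :
    W q (Ax (2 * (N + 1))) * (1 - q ^ (2 * N + 2)) = (1 + q ^ (2 * N + 1)) * W q (Ax (2 * N)) := by
  have h1 := (tendsto_Bx hq (2 * (N + 1)))
  have h2 := (tendsto_Bx hq (2 * N))
  have h1' := h1.comp (Filter.tendsto_add_atTop_nat 1)
  have h2' := h2.comp (Filter.tendsto_add_atTop_nat 1)
  have h3 := h1'.sub (h1.const_mul (q ^ (2 * N + 2)))
  have h4 := h2'.add (h2.const_mul (q ^ (2 * N + 1)))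
  have h5 := tendsto_nhds_unique h3 (h4.congr fun s => ?_)
  · linear_combination h5
  · have := b_row hq s N
    simp only [b] at this
    simp only [Function.comp]
    rw [this]
    ring

lemma Ax_zero (q : ℂ) : W q (Ax 0) = 1 := by
  rw [← W_zero q, ← Bx_zero_right 0]
  congr 1
  ext M
  constructor
  · intro h
    have : M = 0 := by
      refine Multiset.eq_zero_of_forall_notMem fun x hx => ?_
      have := h.2 x hx
      have h0 : x = 0 := by omega
      exact h.1.1 (h0 ▸ hx)
    subst this
    exact ⟨h.1, by simp, h.2⟩
  · intro h
    exact ⟨h.1, h.2.2⟩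

lemma factor_bound (w : ℂ) (hw : ‖w‖ < 1) :
    ‖1 + w‖ ≤ (1 + ‖w‖) * Real.exp (-(1/4) * (‖w‖ - w.re)) := by
  have h0 := norm_nonneg w
  have hre : w.re ≤ ‖w‖ := Complex.re_le_norm w
  have h1 : ‖1 + w‖ ^ 2 = 1 + 2 * w.re + ‖w‖ ^ 2 := by
    rw [← Complex.normSq_eq_norm_sq, ← Complex.normSq_eq_norm_sq, Complex.normSq_apply,
      Complex.normSq_apply]
    simp
    ring
  have h2 : ‖1 + w‖ ^ 2 ≤ ((1 + ‖w‖) * Real.exp (-(1/4) * (‖w‖ - w.re))) ^ 2 := by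
    rw [h1, mul_pow, ← Real.exp_nat_mul]
    have h3 := Real.add_one_le_exp (((2:ℕ):ℝ) * (-(1/4) * (‖w‖ - w.re)))
    have h4 : (1 + ‖w‖) ^ 2 ≤ 4 := by nlinarith
    have h5 := mul_le_mul_of_nonneg_left h3 (sq_nonneg (1 + ‖w‖))
    refine le_trans ?_ h5
    push_cast
    nlinarith
  exact le_of_sq_le_sq h2 (by positivity)

lemma Ax_bound {q : ℂ} (hq : ‖q‖ < 1) (N : ℕ) :
    ‖W q (Ax (2 * N))‖ ≤ ‖W (‖q‖ : ℂ) (Ax (2 * N))‖ *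
      Real.exp (-(1/4) * ∑ i ∈ Finset.range N, (‖q‖ ^ (2 * i + 1) - (q ^ (2 * i + 1)).re)) := by
  have hq' : ‖(‖q‖ : ℂ)‖ < 1 := by simpa using hq
  induction N with
  | zero => simp [Ax_zero]
  | succ N ih =>
    have e1 := congrArg norm (Ax_rec hq N)
    have e2 := congrArg norm (Ax_rec hq' N)
    rw [norm_mul, norm_mul] at e1 e2
    have hp : ‖q‖ ^ (2 * N + 2) < 1 := pow_lt_one₀ (norm_nonneg _) hq (by omega)
    have hp1 : ‖q‖ ^ (2 * N + 1) < 1 := pow_lt_one₀ (norm_nonneg _) hq (by omega)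
    have n1 : ‖(1 : ℂ) - (‖q‖ : ℂ) ^ (2 * N + 2)‖ = 1 - ‖q‖ ^ (2 * N + 2) := by
      rw [← Complex.ofReal_pow, ← Complex.ofReal_one, ← Complex.ofReal_sub, Complex.norm_real,
        Real.norm_of_nonneg (by linarith)]
    have n2 : ‖(1 : ℂ) + (‖q‖ : ℂ) ^ (2 * N + 1)‖ = 1 + ‖q‖ ^ (2 * N + 1) := by
      rw [← Complex.ofReal_pow, ← Complex.ofReal_one, ← Complex.ofReal_add, Complex.norm_real,
        Real.norm_of_nonneg (by positivity)]
    have n3 : 1 - ‖q‖ ^ (2 * N + 2) ≤ ‖1 - q ^ (2 * N + 2)‖ := by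
      have := norm_sub_norm_le (1 : ℂ) (q ^ (2 * N + 2))
      simpa using this
    have n4 := factor_bound (q ^ (2 * N + 1)) (by simpa using hp1)
    rw [norm_pow] at n4
    rw [n1, n2] at e2
    rw [Finset.sum_range_succ, mul_add (-(1/4) : ℝ), Real.exp_add]
    set E1 := Real.exp (-(1/4) * ∑ i ∈ Finset.range N, (‖q‖ ^ (2 * i + 1) - (q ^ (2 * i + 1)).re))
    set E2 := Real.exp (-(1/4) * (‖q‖ ^ (2 * N + 1) - (q ^ (2 * N + 1)).re))
    have hpos : 0 < 1 - ‖q‖ ^ (2 * N + 2) := by linarith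
    rw [← mul_le_mul_iff_left₀ hpos]
    calc ‖W q (Ax (2 * (N + 1)))‖ * (1 - ‖q‖ ^ (2 * N + 2))
        ≤ ‖W q (Ax (2 * (N + 1)))‖ * ‖1 - q ^ (2 * N + 2)‖ := by gcongr
      _ = ‖1 + q ^ (2 * N + 1)‖ * ‖W q (Ax (2 * N))‖ := e1
      _ ≤ ((1 + ‖q‖ ^ (2 * N + 1)) * E2) * (‖W (‖q‖ : ℂ) (Ax (2 * N))‖ * E1) := by gcongr
      _ = (‖W (‖q‖ : ℂ) (Ax (2 * (N + 1)))‖ * (1 - ‖q‖ ^ (2 * N + 2))) * (E1 * E2) := by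
        rw [e2]; ring
      _ = _ := by ring

lemma W_minor {q : ℂ} (hq : ‖q‖ < 1) :
    ‖W q Pset‖ ≤ ‖W (‖q‖ : ℂ) Pset‖ *
      Real.exp (-(1/4) * (‖q‖ / (1 - ‖q‖ ^ 2) - (q / (1 - q ^ 2)).re)) := by
  have hq' : ‖(‖q‖ : ℂ)‖ < 1 := by simpa using hq
  have h2 : ‖q‖ ^ 2 < 1 := pow_lt_one₀ (norm_nonneg _) hq two_ne_zero
  have g1 : HasSum (fun i : ℕ => ‖q‖ ^ (2 * i + 1)) (‖q‖ / (1 - ‖q‖ ^ 2)) := by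
    have := (hasSum_geometric_of_lt_one (by positivity) h2).mul_right ‖q‖
    simpa only [pow_succ _ (2 * _), pow_mul, div_eq_inv_mul] using this
  have g2 : HasSum (fun i : ℕ => q ^ (2 * i + 1)) (q / (1 - q ^ 2)) := by
    have := (hasSum_geometric_of_norm_lt_one (ξ := q ^ 2) (by simpa using h2)).mul_right q
    simpa only [pow_succ _ (2 * _), pow_mul, div_eq_inv_mul] using this
  have g3 : HasSum (fun i : ℕ => (q ^ (2 * i + 1)).re) (q / (1 - q ^ 2)).re :=
    Complex.hasSum_re g2
  have g4 := (g1.sub g3).tendsto_sum_nat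
  refine le_of_tendsto_of_tendsto' (tendsto_Ax hq).norm
    ((tendsto_Ax hq').norm.mul ((g4.const_mul (-(1/4))).rexp)) (fun N => Ax_bound hq N)

/-- lower bound for the exponent -/
lemma E_bound (t θ : ℝ) (ht : 0 < t) (ht1 : t ≤ 1) (hθ : |θ| ≤ Real.pi) :
    θ ^ 2 / (t * (t ^ 2 + θ ^ 2)) / 40 ≤
     Real.exp (-t) / (1 - Real.exp (-t) ^ 2) -
      (Complex.exp (-(t - θ * Complex.I)) / (1 - Complex.exp (-(t - θ * Complex.I)) ^ 2)).re := by
  have hsinh : 0 < Real.sinh t := Real.sinh_pos_iff.2 ht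
  have hsinh2 : Real.sinh t ≤ 2 * t := by
    have h1 : Real.sinh t = Real.sinh t := rfl
    have e1 : Real.exp t ≤ 1 + 2 * t + t ^ 2 / 1 := by
      have := Real.abs_exp_sub_one_sub_id_le (x := t) (by rw [abs_of_pos ht]; exact ht1)
      have := (abs_le.1 this).2
      linarith
    have e2 : 1 - t ≤ Real.exp (-t) := by
      have := Real.add_one_le_exp (-t); linarith
    have e1 : Real.exp t ≤ 1 + t + t ^ 2 := by
      have := Real.abs_exp_sub_one_sub_id_le (x := t) (by rw [abs_of_pos ht]; exact ht1)
      have := (abs_le.1 this).2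
      linarith
    rw [Real.sinh_eq]
    nlinarith
  have r1 : Real.exp (-t) / (1 - Real.exp (-t) ^ 2) = 1 / (2 * Real.sinh t) := by
    rw [Real.sinh_eq, Real.exp_neg]
    have := Real.exp_pos t
    have h1 : 1 < Real.exp t := Real.one_lt_exp_iff.2 ht
    have h3 : Real.exp t ^ 2 - 1 ≠ 0 := by nlinarith
    have h4 : 1 - (Real.exp t)⁻¹ ^ 2 ≠ 0 := by
      have : (Real.exp t)⁻¹ < 1 := inv_lt_one_of_one_lt₀ h1
      have : 0 < (Real.exp t)⁻¹ := by positivity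
      nlinarith
    have h5 : Real.exp t - (Real.exp t)⁻¹ ≠ 0 := by
      have : (Real.exp t)⁻¹ < 1 := inv_lt_one_of_one_lt₀ h1
      linarith
    rw [div_eq_div_iff h4 (by simpa using h5)]
    field_simp
  have r2 : (Complex.exp (-(t - θ * Complex.I)) / (1 - Complex.exp (-(t - θ * Complex.I)) ^ 2)).re
      = Real.sinh t * Real.cos θ / (2 * (Real.sinh t ^ 2 + Real.sin θ ^ 2)) := by
    have hs : Complex.exp (-(t - θ * Complex.I)) / (1 - Complex.exp (-(t - θ * Complex.I)) ^ 2)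
        = (2 * Complex.sinh (t - θ * Complex.I))⁻¹ := by
      rw [Complex.sinh, Complex.exp_neg]
      have h0 := Complex.exp_ne_zero (t - θ * Complex.I)
      set e := Complex.exp (t - θ * Complex.I)
      by_cases h4 : e ^ 2 - 1 = 0
      · have h5 : e ^ 2 = 1 := sub_eq_zero.1 h4
        have h6 : 1 - e⁻¹ ^ 2 = 0 := by rw [inv_pow, h5]; simp
        have h7 : e - e⁻¹ = 0 := by field_simp; simpa using h4
        rw [h6, h7]; simp
      · have h6 : 1 - e⁻¹ ^ 2 ≠ 0 := by
          intro h; apply h4; field_simp at h; simpa using h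
        have h7 : e - e⁻¹ ≠ 0 := by
          intro h; apply h4; field_simp at h; simpa using h
        field_simp
    have hsv : Complex.sinh (t - θ * Complex.I) =
        ((Real.sinh t * Real.cos θ : ℝ) : ℂ) + ((-(Real.cosh t * Real.sin θ) : ℝ) : ℂ) * Complex.I := by
      rw [Complex.sinh_sub, Complex.sinh_mul_I, Complex.cosh_mul_I]
      push_cast
      ring
    rw [hs, hsv]
    rw [show ∀ x y : ℝ, (2 * ((x:ℂ) + (y:ℂ) * Complex.I)) = ((2*x:ℝ):ℂ) + ((2*y:ℝ):ℂ) * Complex.I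
      by intro x y; push_cast; ring]
    rw [Complex.inv_re, Complex.normSq_add_mul_I]
    have hc : Real.cosh t ^ 2 = Real.sinh t ^ 2 + 1 := Real.cosh_sq t
    have hsc := Real.sin_sq_add_cos_sq θ
    have hd : (2 * (Real.sinh t * Real.cos θ)) ^ 2 + (2 * -(Real.cosh t * Real.sin θ)) ^ 2
        = 4 * (Real.sinh t ^ 2 + Real.sin θ ^ 2) := by
      linear_combination (4 * Real.sin θ ^ 2) * hc + (4 * Real.sinh t ^ 2) * hsc
    rw [hd]
    have hpos : 0 < Real.sinh t ^ 2 + Real.sin θ ^ 2 := by positivity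
    rw [Complex.add_re, Complex.ofReal_re, Complex.re_ofReal_mul, Complex.I_re, mul_zero, add_zero]
    field_simp
    ring
  rw [r1, r2]
  have hlow : 1 / (4 * t) ≤ 1 / (2 * Real.sinh t) :=
    one_div_le_one_div_of_le (by positivity) (by linarith)
  have hfrac : θ ^ 2 / (t * (t ^ 2 + θ ^ 2)) ≤ 1 / t := by
    rw [div_le_div_iff₀ (by positivity) ht]
    nlinarith [pow_pos ht 3]
  have h1t : 0 < 1 / t := by positivity
  have h14 : 1 / (4 * t) = (1 / t) / 4 := by field_simp
  rcases le_or_gt (Real.cos θ) 0 with hc | hc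
  · have : Real.sinh t * Real.cos θ / (2 * (Real.sinh t ^ 2 + Real.sin θ ^ 2)) ≤ 0 :=
      div_nonpos_of_nonpos_of_nonneg (mul_nonpos_of_nonneg_of_nonpos hsinh.le hc) (by positivity)
    linarith
  · have hθ2 : |θ| ≤ Real.pi / 2 := by
      by_contra h
      push Not at h
      rw [← Real.cos_abs] at hc
      have := Real.cos_nonpos_of_pi_div_two_le_of_le h.le (by linarith [Real.pi_pos])
      linarith
    have hsin : 2 / Real.pi * |θ| ≤ |Real.sin θ| := by
      exact Real.mul_abs_le_abs_sin hθ2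
    have hsin2 : 4 / Real.pi ^ 2 * θ ^ 2 ≤ Real.sin θ ^ 2 := by
      have := pow_le_pow_left₀ (by positivity) hsin 2
      rw [mul_pow, sq_abs, sq_abs, div_pow] at this
      linarith
    have hpi : 1 / 10 ≤ 1 / Real.pi ^ 2 := by
      have : Real.pi ^ 2 ≤ 10 := by nlinarith [Real.pi_lt_d2, Real.pi_gt_three]
      exact one_div_le_one_div_of_le (by positivity) this
    have hsin3 : 4 / 10 * θ ^ 2 ≤ Real.sin θ ^ 2 := by
      have e : 4 / Real.pi ^ 2 = 4 * (1 / Real.pi ^ 2) := by ring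
      rw [e] at hsin2
      nlinarith [sq_nonneg θ]
    have h3 : Real.sinh t * Real.cos θ / (2 * (Real.sinh t ^ 2 + Real.sin θ ^ 2)) ≤
        Real.sinh t / (2 * (Real.sinh t ^ 2 + Real.sin θ ^ 2)) := by
      gcongr
      nlinarith [Real.cos_le_one θ]
    have h4 : 1 / (2 * Real.sinh t) - Real.sinh t / (2 * (Real.sinh t ^ 2 + Real.sin θ ^ 2)) =
        1 / (2 * Real.sinh t) * (Real.sin θ ^ 2 / (Real.sinh t ^ 2 + Real.sin θ ^ 2)) := by
      have : 0 < Real.sinh t ^ 2 + Real.sin θ ^ 2 := by positivity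
      field_simp
      ring
    have h5 : (1/10) * (θ ^ 2 / (t ^ 2 + θ ^ 2)) ≤ Real.sin θ ^ 2 / (Real.sinh t ^ 2 + Real.sin θ ^ 2) := by
      have hs4 : Real.sinh t ^ 2 ≤ 4 * t ^ 2 := by nlinarith
      rw [← mul_div_assoc, div_le_div_iff₀ (by positivity) (by positivity)]
      nlinarith [sq_nonneg θ, mul_le_mul_of_nonneg_left hs4 (sq_nonneg θ),
        mul_le_mul_of_nonneg_right hsin3 (sq_nonneg t), mul_nonneg (sq_nonneg θ) (sq_nonneg (Real.sin θ))]
    have h6 : 1 / (4 * t) * ((1/10) * (θ ^ 2 / (t ^ 2 + θ ^ 2))) ≤ 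
        1 / (2 * Real.sinh t) * (Real.sin θ ^ 2 / (Real.sinh t ^ 2 + Real.sin θ ^ 2)) := by
      gcongr
    have h7 : θ ^ 2 / (t * (t ^ 2 + θ ^ 2)) / 40 = 1 / (4 * t) * ((1/10) * (θ ^ 2 / (t ^ 2 + θ ^ 2))) := by
      field_simp
      ring
    linarith

end N2

namespace N2

open Complex

set_option maxHeartbeats 1000000 in
lemma theta_eq {s : ℂ} (hs : 0 < s.re) :
    1 - S (cexp (-s)) 1 - cexp (-s) * (1 - S (cexp (-s)) 2) =
      jacobiTheta₂ (1 / 2 + I * s / (2 * Real.pi)) (2 * I * s / Real.pi) := by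
  have hpi : (Real.pi : ℂ) ≠ 0 := by exact_mod_cast Real.pi_ne_zero
  have him : 0 < (2 * I * s / Real.pi).im := by
    rw [show 2 * I * s / Real.pi = ((2 / Real.pi : ℝ) : ℂ) * (I * s) by push_cast; ring,
      Complex.im_ofReal_mul, Complex.I_mul_im]
    have := Real.pi_pos
    positivity
  have hq : ‖cexp (-s)‖ < 1 := by
    rw [Complex.norm_exp]
    simpa using hs
  set q := cexp (-s) with hqdef
  have hterm : ∀ n : ℤ, jacobiTheta₂_term n (1 / 2 + I * s / (2 * Real.pi)) (2 * I * s / Real.pi)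
      = cexp (n * (Real.pi * I) + (2 * (n:ℂ) ^ 2 + n) * (-s)) := by
    intro n
    rw [jacobiTheta₂_term]
    congr 1
    field_simp
    linear_combination (n * s + 2 * (n:ℂ) ^ 2 * s) * I_sq
  have hsum := hasSum_jacobiTheta₂_term (1 / 2 + I * s / (2 * Real.pi)) him
  have h1 : HasSum (fun n : ℕ => jacobiTheta₂_term (n : ℤ)
      (1 / 2 + I * s / (2 * Real.pi)) (2 * I * s / Real.pi)) (1 - S q 1) := by
    rw [← hasSum_nat_add_iff' 1]
    have := (S_summable hq 1).hasSum.neg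
    rw [show 1 - S q 1 - ∑ i ∈ Finset.range 1, jacobiTheta₂_term (i : ℤ)
      (1 / 2 + I * s / (2 * Real.pi)) (2 * I * s / Real.pi) = - S q 1 by
        rw [Finset.sum_range_one, hterm]; simp]
    refine (hasSum_congr' fun j => ?_).mpr this
    rw [hterm, Complex.exp_add, hqdef, ← Complex.exp_nat_mul]
    rw [show (((j + 1 : ℕ) : ℤ) : ℂ) = ((j + 1 : ℕ) : ℂ) by norm_cast,
      Complex.exp_nat_mul, Complex.exp_pi_mul_I, pow_succ]
    push_cast
    rw [show (2 * ((j:ℂ) + 1) ^ 2 + (j + 1)) * (-s) = ((j:ℂ) + 1) * (2 * j + 1 + 2 * 1) * (-s) by ring]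
    ring_nf
  have h2 : HasSum (fun n : ℕ => jacobiTheta₂_term (-((n : ℤ) + 1))
      (1 / 2 + I * s / (2 * Real.pi)) (2 * I * s / Real.pi)) (-q * (1 - S q 2)) := by
    rw [← hasSum_nat_add_iff' 1]
    have := ((S_summable hq 2).hasSum).mul_left q
    have e0 : jacobiTheta₂_term (-(((0:ℕ) : ℤ) + 1))
      (1 / 2 + I * s / (2 * Real.pi)) (2 * I * s / Real.pi) = - q := by
      rw [hterm, Complex.exp_add, hqdef]
      push_cast
      rw [show (-1:ℂ) * (Real.pi * I) = -(Real.pi * I) by ring, Complex.exp_neg,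
        Complex.exp_pi_mul_I]
      norm_num
    rw [Finset.sum_range_one, e0, show -q * (1 - S q 2) - -q = q * S q 2 by ring]
    refine (hasSum_congr' fun j => ?_).mpr this
    rw [hterm, Complex.exp_add]
    rw [show ((-(((j + 1 : ℕ) : ℤ) + 1) : ℤ) : ℂ) * (Real.pi * I) = -(((j + 2 : ℕ) : ℂ) * (Real.pi * I))
      by push_cast; ring, Complex.exp_neg, Complex.exp_nat_mul, Complex.exp_pi_mul_I,
      mul_left_comm, ← pow_succ', hqdef, ← Complex.exp_nat_mul, ← inv_pow]
    push_cast
    rw [pow_add, show (-1:ℂ)⁻¹ = -1 by norm_num]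
    rw [show (2 * (-((j:ℂ) + 1 + 1)) ^ 2 + -((j:ℂ) + 1 + 1)) * (-s)
      = (((j:ℂ) + 1) * (2 * j + 1 + 2 * 2) + 1) * (-s) by ring]
    ring_nf
  have h3 := (h1.of_nat_of_neg_add_one h2).unique hsum
  rw [← h3]
  ring

/-- the transformed theta function -/
noncomputable def J (s : ℂ) : ℂ := jacobiTheta₂ (1 / 4 - I * Real.pi / (4 * s)) (I * Real.pi / (2 * s))

lemma theta_func {s : ℂ} (hs : 0 < s.re) :
    jacobiTheta₂ (1 / 2 + I * s / (2 * Real.pi)) (2 * I * s / Real.pi) =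
      1 / (2 * s / Real.pi) ^ (1 / 2 : ℂ) *
        cexp (-(Real.pi ^ 2 / (8 * s)) - I * Real.pi / 4 + s / 8) * J s := by
  have hpi : (Real.pi : ℂ) ≠ 0 := by exact_mod_cast Real.pi_ne_zero
  have hs0 : s ≠ 0 := by rintro rfl; simp at hs
  rw [jacobiTheta₂_functional_equation, J]
  have e1 : -I * (2 * I * s / Real.pi) = 2 * s / Real.pi := by
    linear_combination (-2 * s / Real.pi) * I_sq
  have e2 : (1 / 2 + I * s / (2 * Real.pi)) / (2 * I * s / Real.pi) = 1 / 4 - I * Real.pi / (4 * s) := by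
    have := I_ne_zero
    field_simp
    linear_combination (4 * Real.pi) * I_sq
  have e3 : -1 / (2 * I * s / Real.pi) = I * Real.pi / (2 * s) := by
    have := I_ne_zero
    field_simp
    linear_combination (-1) * I_sq
  have e4 : -Real.pi * I * (1 / 2 + I * s / (2 * Real.pi)) ^ 2 / (2 * I * s / Real.pi) =
      -(Real.pi ^ 2 / (8 * s)) - I * Real.pi / 4 + s / 8 := by
    have := I_ne_zero
    field_simp
    linear_combination (-32 * s ^ 2) * I_sq
  rw [e1, e2, e3, e4]

lemma J_term (s : ℂ) (hs0 : s ≠ 0) (n : ℤ) :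
    jacobiTheta₂_term n (1 / 4 - I * Real.pi / (4 * s)) (I * Real.pi / (2 * s)) =
      cexp (n * (Real.pi / 2 * I)) * cexp (-(Real.pi ^ 2 / 2 * (n * (n - 1) : ℤ)) * (1 / s)) := by
  rw [jacobiTheta₂_term, ← Complex.exp_add]
  congr 1
  push_cast
  field_simp
  linear_combination (-4 * n * Real.pi + 4 * n ^ 2 * Real.pi) * I_sq

lemma J_tendsto {ι : Type*} {l : Filter ι} {s : ι → ℂ} (hs : ∀ᶠ i in l, 0 < (s i).re)
    (hlim : Filter.Tendsto (fun i => (1 / s i).re) l Filter.atTop) :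
    Filter.Tendsto (fun i => J (s i)) l (nhds (1 + I)) := by
  have hnn : ∀ n : ℤ, ((n.natAbs : ℝ) - 1) ≤ (n * (n - 1) : ℤ) := by
    intro n
    have : (n.natAbs : ℤ) - 1 ≤ n * (n - 1) := by
      rcases le_or_gt n 0 with h | h
      · rw [Int.ofNat_natAbs_of_nonpos h]; nlinarith
      · rw [Int.natAbs_of_nonneg h.le]; nlinarith
    have h2 : (((n.natAbs : ℤ) - 1 : ℤ) : ℝ) ≤ (n * (n - 1) : ℤ) := by exact_mod_cast this
    push_cast at h2 ⊢
    simpa using h2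
  have hnn0 : ∀ n : ℤ, (0:ℝ) ≤ (n * (n - 1) : ℤ) := by
    intro n
    have : 0 ≤ n * (n - 1) := by
      rcases le_or_gt n 0 with h | h
      · nlinarith
      · nlinarith
    exact_mod_cast this
  set g : ℤ → ℂ := fun n => if n = 0 then 1 else if n = 1 then I else 0
  have hg : ∑' n, g n = 1 + I := by
    rw [tsum_eq_sum (s := {0, 1})]
    · simp [g]
    · intro n hn
      simp only [Finset.mem_insert, Finset.mem_singleton, not_or] at hn
      simp [g, hn.1, hn.2]
  rw [← hg]
  have hbsum : Summable (fun n : ℤ => Real.exp 1 * (Real.exp (-1)) ^ n.natAbs) := by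
    apply Summable.mul_left
    have h1 := summable_geometric_of_lt_one (Real.exp_pos (-1)).le (by simp : Real.exp (-1) < 1)
    refine Summable.of_nat_of_neg ?_ ?_ <;> simpa using h1
  have hnorm : ∀ (i : ι) (n : ℤ), s i ≠ 0 →
      ‖jacobiTheta₂_term n (1 / 4 - I * Real.pi / (4 * s i)) (I * Real.pi / (2 * s i))‖ =
      Real.exp (-(Real.pi ^ 2 / 2 * (n * (n - 1) : ℤ)) * (1 / s i).re) := by
    intro i n h0
    rw [J_term _ h0, norm_mul]
    rw [show (n:ℂ) * (Real.pi / 2 * I) = ((n * (Real.pi / 2) : ℝ) : ℂ) * I by push_cast; ring,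
      Complex.norm_exp_ofReal_mul_I, one_mul, Complex.norm_exp]
    congr 1
    rw [show (-((Real.pi:ℂ) ^ 2 / 2 * (n * (n - 1) : ℤ))) = ((-(Real.pi ^ 2 / 2 * (n * (n - 1) : ℤ)) : ℝ) : ℂ) by
      push_cast; ring, Complex.re_ofReal_mul]
  have hs0 : ∀ᶠ i in l, s i ≠ 0 := by
    filter_upwards [hs] with i hi h
    rw [h] at hi; simp at hi
  have hpi2 : 1 ≤ Real.pi ^ 2 / 2 := by nlinarith [Real.pi_gt_three]
  refine tendsto_tsum_of_dominated_convergence hbsum (fun n => ?_) ?_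
  · by_cases h0 : n = 0
    · subst h0
      simp [g, jacobiTheta₂_term]
      exact tendsto_const_nhds
    by_cases h1 : n = 1
    · subst h1
      refine Filter.Tendsto.congr' ?_ tendsto_const_nhds
      filter_upwards [hs0] with i hi
      rw [J_term _ hi]
      simp [g, Complex.exp_pi_div_two_mul_I]
    · have hg0 : g n = 0 := by simp [g, h0, h1]
      rw [hg0, tendsto_zero_iff_norm_tendsto_zero]
      have hpos : (1:ℝ) ≤ (n * (n - 1) : ℤ) := by
        have : 1 ≤ n * (n - 1) := by
          rcases lt_or_gt_of_ne h0 with h | h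
          · nlinarith
          · have : 2 ≤ n := by omega
            nlinarith
        exact_mod_cast this
      have ht : Filter.Tendsto (fun i => Real.exp (-(Real.pi ^ 2 / 2 * (n * (n - 1) : ℤ)) * (1 / s i).re)) l
          (nhds 0) := by
        refine Real.tendsto_exp_atBot.comp ?_
        refine Filter.Tendsto.const_mul_atTop_of_neg ?_ hlim
        nlinarith
      refine ht.congr' ?_
      filter_upwards [hs0] with i hi
      rw [hnorm i n hi]
  · filter_upwards [hs0, hlim.eventually_ge_atTop 1] with i hi h1 n
    rw [hnorm i n hi, ← Real.exp_nat_mul, ← Real.exp_add]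
    apply Real.exp_le_exp.2
    have := hnn n
    have h0 := hnn0 n
    have : (n * (n - 1) : ℤ) ≤ (Real.pi ^ 2 / 2 * (n * (n - 1) : ℤ)) * (1 / s i).re := by
      have h3 : ((n * (n - 1) : ℤ) : ℝ) ≤ (Real.pi ^ 2 / 2 * (n * (n - 1) : ℤ)) := by nlinarith
      nlinarith
    linarith

lemma W_asymp {ι : Type*} {l : Filter ι} {s : ι → ℂ} (hs : ∀ᶠ i in l, 0 < (s i).re)
    (h0 : Filter.Tendsto s l (nhds 0))
    (hlim : Filter.Tendsto (fun i => (1 / s i).re) l Filter.atTop) :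
    Filter.Tendsto (fun i => W (cexp (-(s i))) Pset *
      cexp (-(Real.pi ^ 2 / (8 * s i))) / (2 * s i / Real.pi) ^ (1 / 2 : ℂ)) l
      (nhds (cexp (I * Real.pi / 4) / (1 + I))) := by
  have h1I : (1 + I : ℂ) ≠ 0 := by
    intro h; have := congrArg Complex.re h; simp at this
  have hJ := J_tendsto hs hlim
  have hc : Filter.Tendsto (fun i => cexp (I * Real.pi / 4 - s i / 8) / J (s i)) l
      (nhds (cexp (I * Real.pi / 4 - 0 / 8) / (1 + I))) := by
    refine Filter.Tendsto.div ?_ hJ h1I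
    exact (Filter.Tendsto.sub tendsto_const_nhds (h0.div_const 8)).cexp
  rw [zero_div, sub_zero] at hc
  refine hc.congr' ?_
  filter_upwards [hs, hJ.eventually_ne h1I] with i hi hJi
  have hpi : (Real.pi : ℂ) ≠ 0 := by exact_mod_cast Real.pi_ne_zero
  have hs0 : s i ≠ 0 := by intro h; rw [h] at hi; simp at hi
  have hq : ‖cexp (-(s i))‖ < 1 := by
    rw [Complex.norm_exp]
    simpa using hi
  have h := W_theta hq
  rw [theta_eq hi, theta_func hi] at h
  have hp : (2 * s i / Real.pi) ^ (1 / 2 : ℂ) ≠ 0 := by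
    rw [Complex.cpow_ne_zero_iff]
    left
    exact div_ne_zero (mul_ne_zero two_ne_zero hs0) hpi
  rw [div_eq_div_iff hJi hp]
  have e1 : cexp (-(Real.pi ^ 2 / (8 * s i)) - I * Real.pi / 4 + s i / 8) =
    cexp (-(Real.pi ^ 2 / (8 * s i))) / cexp (I * Real.pi / 4 - s i / 8) := by
    rw [← Complex.exp_sub]; congr 1; ring
  rw [e1] at h
  have hE := Complex.exp_ne_zero (I * Real.pi / 4 - s i / 8)
  generalize cexp (I * Real.pi / 4 - s i / 8) = a at *
  generalize cexp (-(Real.pi ^ 2 / (8 * s i))) = c at *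
  generalize (2 * s i / Real.pi) ^ (1 / 2 : ℂ) = d at *
  generalize J (s i) = e at *
  generalize W (cexp (-s i)) Pset = f at *
  field_simp at h
  linear_combination (-1) * h

end N2

namespace N2

open Complex

def aR (M : Multiset ℕ) : ℕ := ((lm M : ℤ) - (Multiset.card M : ℤ)).natAbs

def D (p i : ℕ) : ℕ := (i + 1) ^ p - i ^ p

lemma D_sum {p : ℕ} (hp : 1 ≤ p) (a : ℕ) : ∑ i ∈ Finset.range a, D p i = a ^ p := by
  induction a with
  | zero => simp [Nat.pos_iff_ne_zero.1 hp]
  | succ a ih =>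
    rw [Finset.sum_range_succ, ih, D]
    have : a ^ p ≤ (a + 1) ^ p := Nat.pow_le_pow_left (Nat.le_succ _) _
    omega

lemma D_cast (p i : ℕ) : ((D p i : ℕ) : ℂ) = ((i + 1 : ℕ) : ℂ) ^ p - (i : ℂ) ^ p := by
  rw [D, Nat.cast_sub (Nat.pow_le_pow_left (Nat.le_succ _) _)]
  push_cast; ring

lemma D_le (p i : ℕ) : D p i ≤ (i + 1) ^ p := Nat.sub_le _ _

noncomputable def Mom (q : ℂ) (p : ℕ) : ℂ :=
  ∑' M, Pset.indicator (fun M => ((aR M : ℕ) : ℂ) ^ p * q ^ M.sum) M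

lemma card_le_sum {M : Multiset ℕ} (hM : M ∈ Pset) : Multiset.card M ≤ M.sum := by
  have : ∀ x ∈ M, 1 ≤ x := fun x hx => by
    rcases Nat.eq_zero_or_pos x with h | h
    · exact absurd (h ▸ hx) hM.1
    · exact h
  simpa using Multiset.card_nsmul_le_sum this

lemma lm_le_sum (M : Multiset ℕ) : lm M ≤ M.sum := by
  rw [lm_le]
  intro x hx
  have := Multiset.single_le_sum (fun _ _ => Nat.zero_le _) x hx
  omega

lemma aR_le {M : Multiset ℕ} (hM : M ∈ Pset) : aR M ≤ M.sum := by
  have h1 := card_le_sum hM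
  have h2 := lm_le_sum M
  rw [aR]; omega

lemma pow_geom_bdd (p : ℕ) {ρ : ℝ} (h0 : 0 ≤ ρ) (h1 : ρ < 1) :
    ∃ C : ℝ, ∀ n : ℕ, (n:ℝ) ^ p * ρ ^ n ≤ C := by
  have h := (summable_pow_mul_geometric_of_norm_lt_one p (r := ρ)
    (by rwa [Real.norm_of_nonneg h0])).tendsto_atTop_zero
  obtain ⟨C, hC⟩ := h.bddAbove_range
  exact ⟨C, fun n => hC ⟨n, rfl⟩⟩

lemma summable_mom (p : ℕ) {ρ : ℝ} (h0 : 0 ≤ ρ) (h1 : ρ < 1) :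
    Summable (fun M => Pset.indicator (fun M => ((aR M : ℕ) : ℝ) ^ p * ρ ^ M.sum) M) := by
  obtain ⟨C, hC⟩ := pow_geom_bdd p (Real.sqrt_nonneg ρ) (by rw [Real.sqrt_lt' one_pos]; simpa using h1)
  have hs := (summable_Pset (Real.sqrt ρ) (Real.sqrt_nonneg ρ)
    (by rw [Real.sqrt_lt' one_pos]; simpa using h1)).mul_left C
  refine Summable.of_nonneg_of_le (fun M => ?_) (fun M => ?_) hs
  · exact Set.indicator_nonneg (fun _ _ => by positivity) _
  · by_cases hM : M ∈ Pset
    · rw [Set.indicator_of_mem hM, Set.indicator_of_mem hM]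
      have e : ρ ^ M.sum = Real.sqrt ρ ^ M.sum * Real.sqrt ρ ^ M.sum := by
        rw [← mul_pow, Real.mul_self_sqrt h0]
      rw [e, ← mul_assoc]
      have h2 := hC M.sum
      have h3 : ((aR M : ℕ) : ℝ) ^ p ≤ (M.sum : ℝ) ^ p := by
        apply pow_le_pow_left₀ (by positivity)
        exact_mod_cast aR_le hM
      have h4 : 0 ≤ Real.sqrt ρ ^ M.sum := by positivity
      refine mul_le_mul_of_nonneg_right ?_ h4
      refine le_trans (mul_le_mul_of_nonneg_right h3 h4) h2
    · simp [hM]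

lemma ind_eq (f : Multiset ℕ → ℂ) (M : Multiset ℕ) (i : ℕ) :
    (Rge (i + 1)).indicator f M + (Rneg (i + 1)).indicator f M =
      Pset.indicator (fun M => if i < aR M then f M else 0) M := by
  by_cases hM : M ∈ Pset
  · rw [Set.indicator_of_mem hM]
    have k1 : M ∈ Rge (i + 1) ↔ Multiset.card M + (i + 1) ≤ lm M := by
      simp only [Rge, Set.mem_ofPred_eq]
      constructor
      · exact fun h => h.2.2
      · refine fun h => ⟨hM, ?_, h⟩
        rintro rfl
        rw [lm_zero] at h; omega
    have k2 : M ∈ Rneg (i + 1) ↔ lm M + (i + 1) ≤ Multiset.card M := by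
      simp only [Rneg, Set.mem_ofPred_eq]
      exact ⟨fun h => h.2, fun h => ⟨hM, h⟩⟩
    simp only [Set.indicator_apply, k1, k2, aR]
    split_ifs <;> first | omega | (simp only [add_zero, zero_add]; first | exact (if_pos (by assumption)).symm | exact (if_neg (by assumption)).symm)
  · rw [Set.indicator_of_notMem hM, Set.indicator_of_notMem (fun h => hM h.1),
      Set.indicator_of_notMem (fun h => hM h.1), add_zero]

lemma hasSum_D {p : ℕ} (hp : 1 ≤ p) (a : ℕ) (z : ℂ) :
    HasSum (fun i => (D p i : ℂ) * (if i < a then z else 0)) ((a : ℂ) ^ p * z) := by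
  have := hasSum_sum_of_ne_finset_zero (L := SummationFilter.unconditional ℕ) (f := fun i => (D p i : ℂ) * (if i < a then z else 0))
    (s := Finset.range a) (fun i hi => by
      rw [Finset.mem_range] at hi; simp [hi])
  rwa [Finset.sum_congr rfl (fun i hi => by rw [if_pos (Finset.mem_range.1 hi)]),
    ← Finset.sum_mul, ← Nat.cast_sum, D_sum hp, Nat.cast_pow] at this

lemma Mom_eq1 {q : ℂ} (hq : ‖q‖ < 1) {p : ℕ} (hp : 1 ≤ p) :
    Mom q p = ∑' i, (D p i : ℂ) * (2 * (W q Pset * S q (i + 1))) := by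
  set F : Multiset ℕ → ℕ → ℂ := fun M i =>
    (D p i : ℂ) * Pset.indicator (fun M => if i < aR M then q ^ M.sum else 0) M with hF
  have hrow : ∀ M, HasSum (F M) (Pset.indicator (fun M => ((aR M : ℕ) : ℂ) ^ p * q ^ M.sum) M) := by
    intro M
    by_cases hM : M ∈ Pset
    · simp only [hF, Set.indicator_of_mem hM]
      exact hasSum_D hp _ _
    · simp only [hF, Set.indicator_of_notMem hM, mul_zero]
      exact hasSum_zero
  have hrown : ∀ M, HasSum (fun i => ‖F M i‖)
      (Pset.indicator (fun M => ((aR M : ℕ) : ℝ) ^ p * ‖q‖ ^ M.sum) M) := by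
    intro M
    by_cases hM : M ∈ Pset
    · simp only [hF, Set.indicator_of_mem hM]
      have := hasSum_D hp (aR M) ((‖q‖ ^ M.sum : ℝ) : ℂ)
      rw [← Complex.hasSum_ofReal]
      push_cast
      refine (hasSum_congr' fun i => ?_).mpr (by simpa using this)
      split_ifs <;> simp
    · simp only [hF, Set.indicator_of_notMem hM, mul_zero, norm_zero]
      exact hasSum_zero
  have hsum : Summable (Function.uncurry F) := by
    refine Summable.of_norm ?_
    rw [summable_prod_of_nonneg (fun _ => norm_nonneg _)]
    refine ⟨fun M => (hrown M).summable, ?_⟩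
    refine (summable_mom p (norm_nonneg q) hq).congr fun M => ?_
    exact (hrown M).tsum_eq.symm
  have h1 : Mom q p = ∑' M, ∑' i, F M i := by
    rw [Mom]; exact tsum_congr fun M => (hrow M).tsum_eq.symm
  rw [h1, ← hsum.tsum_comm]
  refine tsum_congr fun i => ?_
  simp only [hF]
  rw [tsum_mul_left]
  congr 1
  rw [← tsum_congr (fun M => ind_eq (fun M => q ^ M.sum) M i)]
  rw [Summable.tsum_add (summable_W hq fun _ h => h.1) (summable_W hq fun _ h => h.1)]
  change W q (Rge (i + 1)) + W q (Rneg (i + 1)) = _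
  rw [W_symm hq _ (by omega), W_Rge hq]
  ring

noncomputable def T (p : ℕ) (x : ℂ) : ℂ := ∑' m : ℕ, (m : ℂ) ^ p * x ^ m

lemma T_summable (p : ℕ) {x : ℂ} (hx : ‖x‖ < 1) : Summable (fun m : ℕ => (m : ℂ) ^ p * x ^ m) :=
  summable_pow_mul_geometric_of_norm_lt_one p hx

lemma T_shift {p : ℕ} (hp : 1 ≤ p) {x : ℂ} (hx : ‖x‖ < 1) :
    HasSum (fun m : ℕ => ((m + 1 : ℕ) : ℂ) ^ p * x ^ (m + 1)) (T p x) := by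
  have := (T_summable p hx).hasSum
  rw [← hasSum_nat_add_iff' 1] at this
  simpa [Nat.pos_iff_ne_zero.1 hp, T] using this

lemma T_diff {p : ℕ} (hp : 1 ≤ p) {x : ℂ} (hx : ‖x‖ < 1) :
    HasSum (fun i : ℕ => (D p i : ℂ) * x ^ (i + 1)) ((1 - x) * T p x) := by
  have h1 := T_shift hp hx
  have h2 := ((T_summable p hx).hasSum).mul_left x
  rw [sub_mul, one_mul]
  refine (hasSum_congr' fun i => ?_).mpr (h1.sub h2)
  rw [D_cast]; ring

noncomputable def GS (q : ℂ) (p : ℕ) : ℂ :=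
  ∑' j : ℕ, (-1) ^ j * q ^ ((j + 1) * (2 * j + 1)) *
    ((1 - q ^ (2 * (j + 1))) * T p (q ^ (2 * (j + 1))))

lemma Mom_eq {q : ℂ} (hq : ‖q‖ < 1) {p : ℕ} (hp : 1 ≤ p) :
    Mom q p = 2 * W q Pset * GS q p := by
  rw [Mom_eq1 hq hp]
  rw [tsum_congr (fun i => show (D p i : ℂ) * (2 * (W q Pset * S q (i + 1))) =
    2 * W q Pset * (D p i * S q (i + 1)) by ring), tsum_mul_left]
  congr 1
  set F : ℕ → ℕ → ℂ := fun i j =>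
    (D p i : ℂ) * ((-1) ^ j * q ^ ((j + 1) * (2 * j + 1 + 2 * (i + 1)))) with hF
  have hsum : Summable (Function.uncurry F) := by
    have hg := summable_geometric_of_lt_one (norm_nonneg q) hq
    have hd : Summable (fun i : ℕ => (D p i : ℝ) * ‖q‖ ^ (i + 1)) := by
      refine ((T_diff hp hq).summable.norm).congr fun i => ?_
      simp
    have := hd.mul_of_nonneg hg (fun _ => by positivity) (fun _ => by positivity)
    refine Summable.of_norm_bounded this fun ⟨i, j⟩ => ?_
    simp only [hF, Function.uncurry, norm_mul, norm_pow, norm_neg, norm_one, one_pow, one_mul,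
      Complex.norm_natCast]
    rw [mul_assoc, ← pow_add]
    refine mul_le_mul_of_nonneg_left ?_ (by positivity)
    refine pow_le_pow_of_le_one (norm_nonneg _) hq.le ?_
    nlinarith [Nat.zero_le (j * i), Nat.zero_le (j * j)]
  have h1 : ∀ i, (D p i : ℂ) * S q (i + 1) = ∑' j, F i j := by
    intro i
    rw [S, ← tsum_mul_left]
  rw [tsum_congr h1, ← hsum.tsum_comm, GS]
  refine tsum_congr fun j => ?_
  have hx : ‖q ^ (2 * (j + 1))‖ < 1 := by
    rw [norm_pow]; exact pow_lt_one₀ (norm_nonneg _) hq (by omega)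
  rw [← (T_diff hp hx).tsum_eq, ← tsum_mul_left]
  refine tsum_congr fun i => ?_
  simp only [hF]
  ring

end N2

namespace N2

open Complex

lemma T_rec {p : ℕ} (hp : 1 ≤ p) {x : ℂ} (hx : ‖x‖ < 1) :
    (1 - x) * T p x = x * ∑ i ∈ Finset.range p, (p.choose i : ℂ) * T i x := by
  have h1 := T_shift hp hx
  have h2 : HasSum (fun m : ℕ => ((m + 1 : ℕ) : ℂ) ^ p * x ^ (m + 1))
      (x * ∑ i ∈ Finset.range (p + 1), (p.choose i : ℂ) * T i x) := by
    have h3 : HasSum (fun m : ℕ => ∑ i ∈ Finset.range (p + 1), (p.choose i : ℂ) * ((m : ℂ) ^ i * x ^ m))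
        (∑ i ∈ Finset.range (p + 1), (p.choose i : ℂ) * T i x) :=
      hasSum_sum fun i _ => ((T_summable i hx).hasSum).mul_left _
    refine (hasSum_congr' fun m => ?_).mpr (h3.mul_left x)
    push_cast
    rw [add_pow, Finset.mul_sum, Finset.sum_mul]
    refine Finset.sum_congr rfl fun i _ => ?_
    rw [one_pow]; ring
  have h3 := h1.unique h2
  rw [Finset.sum_range_succ, Nat.choose_self, Nat.cast_one, one_mul] at h3
  linear_combination h3

lemma T_lim (p : ℕ) : Filter.Tendsto (fun x : ℂ => (1 - x) ^ (p + 1) * T p x)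
    (nhdsWithin 1 (Metric.ball 0 1)) (nhds (p.factorial : ℂ)) := by
  induction p using Nat.strong_induction_on with
  | _ p ih =>
    have hx1 : Filter.Tendsto (fun x : ℂ => x) (nhdsWithin 1 (Metric.ball 0 1)) (nhds 1) :=
      Filter.tendsto_id.mono_left nhdsWithin_le_nhds
    rcases p with _ | p
    · refine Filter.Tendsto.congr' ?_ tendsto_const_nhds
      filter_upwards [self_mem_nhdsWithin] with x hx
      have hx' : ‖x‖ < 1 := by simpa using hx
      have h1 : 1 - x ≠ 0 := by
        intro h; rw [sub_eq_zero] at h; rw [← h] at hx'; simp at hx'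
      have : T 0 x = (1 - x)⁻¹ := by
        rw [T, ← tsum_geometric_of_norm_lt_one hx']
        simp
      rw [this]; simp [h1]
    · have h1 : Filter.Tendsto (fun x : ℂ => x * ∑ i ∈ Finset.range (p + 1),
          ((p + 1).choose i : ℂ) * ((1 - x) ^ (p - i) * ((1 - x) ^ (i + 1) * T i x)))
          (nhdsWithin 1 (Metric.ball 0 1))
          (nhds (1 * ∑ i ∈ Finset.range (p + 1), ((p + 1).choose i : ℂ) * ((1 - 1) ^ (p - i) * (i.factorial : ℂ)))) := by
        refine hx1.mul (tendsto_finsetSum _ fun i hi => ?_)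
        refine Filter.Tendsto.const_mul _ (Filter.Tendsto.mul ?_ (ih i (Finset.mem_range.1 hi)))
        exact (tendsto_const_nhds.sub hx1).pow _
      have h2 : (1 * ∑ i ∈ Finset.range (p + 1), ((p + 1).choose i : ℂ) * ((1 - 1) ^ (p - i) * (i.factorial : ℂ)))
          = ((p + 1).factorial : ℂ) := by
        rw [Finset.sum_range_succ, Finset.sum_eq_zero]
        · simp [Nat.factorial_succ]
        · intro i hi
          rw [Finset.mem_range] at hi
          rw [sub_self, zero_pow (by omega)]; ring
      rw [h2] at h1
      refine h1.congr' ?_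
      filter_upwards [self_mem_nhdsWithin] with x hx
      have hx' : ‖x‖ < 1 := by simpa using hx
      rw [pow_succ, mul_assoc, T_rec (by omega) hx', mul_left_comm, Finset.mul_sum (a := (1 - x) ^ (p + 1))]
      congr 1
      refine Finset.sum_congr rfl fun i hi => ?_
      rw [Finset.mem_range] at hi
      have e : (1 - x) ^ (p + 1) = (1 - x) ^ (p - i) * (1 - x) ^ (i + 1) := by
        rw [← pow_add]; congr 1; omega
      rw [e]
      ring

lemma T_bound (p : ℕ) {r : ℝ} (h0 : 0 ≤ r) (hr : r < 1) :
    ‖T p (r : ℂ)‖ ≤ p.factorial / (1 - r) ^ (p + 1) := by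
  have h := (hasSum_choose_mul_geometric_of_norm_lt_one p (r := r)
    (by rwa [Real.norm_of_nonneg h0])).mul_left (p.factorial : ℝ)
  rw [mul_one_div] at h
  refine tsum_of_norm_bounded h fun m => ?_
  rw [norm_mul, norm_pow, norm_pow, Complex.norm_natCast, Complex.norm_real, Real.norm_of_nonneg h0,
    ← mul_assoc]
  refine mul_le_mul_of_nonneg_right ?_ (by positivity)
  have h1 : m ^ p ≤ (m + 1).ascFactorial p :=
    (Nat.pow_le_pow_left (Nat.le_succ m) p).trans (Nat.pow_succ_le_ascFactorial _ _)
  rw [Nat.ascFactorial_eq_factorial_mul_choose] at h1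
  exact_mod_cast h1

lemma Td_bound {p : ℕ} (hp : 1 ≤ p) {x : ℂ} (hx : ‖x‖ < 1) :
    ‖(1 - x) * T p x‖ ≤ p.factorial / (1 - ‖x‖) ^ p := by
  have hx0 := norm_nonneg x
  have hr : ‖((‖x‖ : ℝ) : ℂ)‖ < 1 := by simpa using hx
  have h1 := T_diff hp hr
  have hs : Summable (fun i : ℕ => (D p i : ℝ) * ‖x‖ ^ (i + 1)) := by
    refine h1.summable.norm.congr fun i => ?_
    simp
  have h2 : ((∑' i : ℕ, (D p i : ℝ) * ‖x‖ ^ (i + 1) : ℝ) : ℂ) = (1 - ((‖x‖ : ℝ) : ℂ)) * T p ((‖x‖ : ℝ) : ℂ) := by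
    rw [← h1.tsum_eq]; push_cast; rfl
  have h3 : ‖(1 - x) * T p x‖ ≤ ∑' i : ℕ, (D p i : ℝ) * ‖x‖ ^ (i + 1) := by
    rw [← (T_diff hp hx).tsum_eq]
    refine tsum_of_norm_bounded hs.hasSum fun i => ?_
    simp
  refine h3.trans ?_
  have h4 : (∑' i : ℕ, (D p i : ℝ) * ‖x‖ ^ (i + 1)) ≤ ‖(1 - ((‖x‖ : ℝ) : ℂ)) * T p ((‖x‖ : ℝ) : ℂ)‖ := by
    rw [← h2, Complex.norm_real]; exact Real.le_norm_self _
  refine h4.trans ?_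
  rw [norm_mul]
  have h5 := T_bound p hx0 hx
  have h6 : ‖(1 - ((‖x‖ : ℝ) : ℂ))‖ = 1 - ‖x‖ := by
    rw [← Complex.ofReal_one, ← Complex.ofReal_sub, Complex.norm_real, Real.norm_of_nonneg (by linarith)]
  have h7 : 0 < 1 - ‖x‖ := by linarith
  rw [h6]
  refine (mul_le_mul_of_nonneg_left h5 h7.le).trans (le_of_eq ?_)
  field_simp
  ring

lemma GS_term_bound {p : ℕ} (hp : 2 ≤ p) {q : ℂ} {t : ℝ} (ht : 0 < t) (ht1 : t ≤ 1)
    (hq : ‖q‖ = Real.exp (-t)) (j : ℕ) :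
    ‖(t : ℂ) ^ p * ((-1) ^ j * q ^ ((j + 1) * (2 * j + 1)) *
      ((1 - q ^ (2 * (j + 1))) * T p (q ^ (2 * (j + 1)))))‖ ≤
      (p.factorial * 2 ^ (p + 1)) * (1 / ((j:ℝ) + 1) ^ 2) := by
  have hρ : Real.exp (-t) < 1 := by simpa using ht
  set k : ℝ := (j:ℝ) + 1 with hk
  have hk1 : 1 ≤ k := by rw [hk]; linarith [Nat.cast_nonneg (α := ℝ) j]
  have hx : ‖q ^ (2 * (j + 1))‖ = Real.exp (-(2 * k * t)) := by
    rw [norm_pow, hq, ← Real.exp_nat_mul, hk]; push_cast; congr 1; ring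
  have hx1 : ‖q ^ (2 * (j + 1))‖ < 1 := by
    rw [hx, Real.exp_lt_one_iff]; have : 0 < 2 * k * t := by positivity
    linarith
  have hT := Td_bound (by omega : 1 ≤ p) hx1
  rw [norm_mul, norm_mul, norm_mul, norm_pow, norm_pow, norm_neg, norm_one, one_pow, one_mul,
    Complex.norm_real, Real.norm_of_nonneg ht.le, norm_pow, hq]
  have e1 : Real.exp (-t) ^ ((j + 1) * (2 * j + 1)) ≤ Real.exp (-(t * k ^ 2)) := by
    rw [← Real.exp_nat_mul]
    apply Real.exp_le_exp.2
    push_cast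
    rw [hk]
    have := Nat.cast_nonneg (α := ℝ) j
    have : 0 ≤ t * ((j:ℝ) + 1) * j := by positivity
    nlinarith
  have e2 : t / (1 - ‖q ^ (2 * (j + 1))‖) ≤ 1 / k + t := by
    have hy : 0 < 2 * k * t := by positivity
    have h1 : Real.exp (-(2 * k * t)) ≤ 1 / (1 + 2 * k * t) := by
      rw [Real.exp_neg, ← one_div]
      exact one_div_le_one_div_of_le (by positivity) (by linarith [Real.add_one_le_exp (2 * k * t)])
    have h2 : 2 * k * t / (1 + 2 * k * t) ≤ 1 - ‖q ^ (2 * (j + 1))‖ := by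
      rw [hx]
      have : 2 * k * t / (1 + 2 * k * t) = 1 - 1 / (1 + 2 * k * t) := by field_simp; ring
      linarith
    refine (div_le_div_of_nonneg_left ht.le (by positivity) h2).trans ?_
    have : t / (2 * k * t / (1 + 2 * k * t)) = 1 / (2 * k) + t := by field_simp
    rw [this]
    have : 1 / (2 * k) ≤ 1 / k := one_div_le_one_div_of_le (by positivity) (by linarith)
    linarith
  have e0 : 0 ≤ t / (1 - ‖q ^ (2 * (j + 1))‖) := div_nonneg ht.le (by linarith)
  have e3 : (t / (1 - ‖q ^ (2 * (j + 1))‖)) ^ p ≤ 2 ^ p * (1 / k ^ 2 + t) := by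
    refine (pow_le_pow_left₀ e0 e2 p).trans ?_
    refine (add_pow_le (by positivity) ht.le p).trans ?_
    have h1 : (1 / k) ^ p ≤ 1 / k ^ 2 := by
      rw [← one_div_pow]
      exact pow_le_pow_of_le_one (by positivity) (by rw [div_le_one (by positivity)]; exact hk1) hp
    have h2 : t ^ p ≤ t := pow_le_of_le_one ht.le ht1 (by omega)
    have h3 : (2:ℝ) ^ (p - 1) ≤ 2 ^ p := pow_le_pow_right₀ (by norm_num) (by omega)
    exact mul_le_mul h3 (by linarith) (by positivity) (by positivity)
  have e4 : Real.exp (-(t * k ^ 2)) * (1 / k ^ 2 + t) ≤ 2 * (1 / k ^ 2) := by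
    have h1 : Real.exp (-(t * k ^ 2)) ≤ 1 := by
      rw [Real.exp_le_one_iff]; have : 0 ≤ t * k ^ 2 := by positivity
      linarith
    have h2 : Real.exp (-(t * k ^ 2)) * t ≤ 1 / k ^ 2 := by
      rw [Real.exp_neg, inv_mul_le_iff₀ (Real.exp_pos _), mul_one_div, le_div_iff₀ (by positivity)]
      linarith [Real.add_one_le_exp (t * k ^ 2)]
    have h3 : 0 ≤ 1 / k ^ 2 := by positivity
    nlinarith
  calc t ^ p * (Real.exp (-t) ^ ((j + 1) * (2 * j + 1)) *
      ‖(1 - q ^ (2 * (j + 1))) * T p (q ^ (2 * (j + 1)))‖)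
      ≤ t ^ p * (Real.exp (-(t * k ^ 2)) * (p.factorial / (1 - ‖q ^ (2 * (j + 1))‖) ^ p)) := by
        refine mul_le_mul_of_nonneg_left ?_ (by positivity)
        exact mul_le_mul e1 hT (norm_nonneg _) (Real.exp_pos _).le
    _ = p.factorial * Real.exp (-(t * k ^ 2)) * (t / (1 - ‖q ^ (2 * (j + 1))‖)) ^ p := by
        rw [div_pow]; ring
    _ ≤ p.factorial * Real.exp (-(t * k ^ 2)) * (2 ^ p * (1 / k ^ 2 + t)) :=
        mul_le_mul_of_nonneg_left e3 (by positivity)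
    _ = p.factorial * 2 ^ p * (Real.exp (-(t * k ^ 2)) * (1 / k ^ 2 + t)) := by ring
    _ ≤ p.factorial * 2 ^ p * (2 * (1 / k ^ 2)) := mul_le_mul_of_nonneg_left e4 (by positivity)
    _ = _ := by rw [pow_succ]; ring

lemma sum_sq : Summable (fun j : ℕ => 1 / ((j:ℝ) + 1) ^ 2) := by
  have := (summable_nat_add_iff 1).2 (Real.summable_one_div_nat_pow.2 (by norm_num : 1 < 2))
  refine this.congr fun j => ?_
  push_cast; rfl

lemma GS_bound {p : ℕ} (hp : 2 ≤ p) : ∃ C : ℝ, 0 ≤ C ∧ ∀ (q : ℂ) (t : ℝ), 0 < t → t ≤ 1 →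
    ‖q‖ = Real.exp (-t) → ‖(t : ℂ) ^ p * GS q p‖ ≤ C := by
  refine ⟨∑' j : ℕ, (p.factorial * 2 ^ (p + 1)) * (1 / ((j:ℝ) + 1) ^ 2),
    tsum_nonneg fun _ => by positivity, fun q t h0 h1 hq => ?_⟩
  rw [GS, ← tsum_mul_left]
  exact tsum_of_norm_bounded (sum_sq.mul_left _).hasSum fun j => GS_term_bound hp h0 h1 hq j

lemma exp_slope (N : ℕ) : Filter.Tendsto (fun s : ℂ => (1 - cexp (-s) ^ N) / s)
    (nhdsWithin 0 {0}ᶜ) (nhds (N : ℂ)) := by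
  have h : HasDerivAt (fun s : ℂ => cexp (-s) ^ N) (-(N : ℂ)) 0 := by
    have := ((hasDerivAt_neg (0:ℂ)).cexp).fun_pow N
    simpa using this
  have h2 := (hasDerivAt_iff_tendsto_slope.1 h).neg
  rw [neg_neg] at h2
  refine h2.congr fun s => ?_
  simp [slope_def_field]
  ring

lemma GS_lim {ι : Type*} {l : Filter ι} {s : ι → ℂ} {p : ℕ} (hp : 2 ≤ p)
    (hs : ∀ᶠ i in l, 0 < (s i).re) (h0 : Filter.Tendsto s l (nhds 0))
    (hr : Filter.Tendsto (fun i => ((s i).re : ℂ) / s i) l (nhds 1)) :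
    Filter.Tendsto (fun i => ((s i).re : ℂ) ^ p * GS (cexp (-(s i))) p) l
      (nhds (∑' j : ℕ, (-1 : ℂ) ^ j * (p.factorial * (1 / (2 * ((j:ℂ) + 1))) ^ p))) := by
  have hs0 : ∀ᶠ i in l, s i ≠ 0 := by
    filter_upwards [hs] with i hi h
    rw [h] at hi; simp at hi
  have hnq : ∀ i, ‖cexp (-(s i))‖ = Real.exp (-(s i).re) := by
    intro i; rw [Complex.norm_exp]; simp
  have hre : Filter.Tendsto (fun i => (s i).re) l (nhds 0) := by
    have := (Complex.continuous_re.tendsto 0).comp h0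
    rw [Complex.zero_re] at this
    exact this
  have hq1 : Filter.Tendsto (fun i => cexp (-(s i))) l (nhds 1) := by
    simpa using h0.neg.cexp
  have hlem : Filter.Tendsto (fun i => ∑' j : ℕ, ((s i).re : ℂ) ^ p *
      ((-1) ^ j * cexp (-(s i)) ^ ((j + 1) * (2 * j + 1)) *
      ((1 - cexp (-(s i)) ^ (2 * (j + 1))) * T p (cexp (-(s i)) ^ (2 * (j + 1)))))) l
      (nhds (∑' j : ℕ, (-1 : ℂ) ^ j * (p.factorial * (1 / (2 * ((j:ℂ) + 1))) ^ p))) := by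
    refine tendsto_tsum_of_dominated_convergence
      (sum_sq.mul_left (p.factorial * 2 ^ (p + 1) : ℝ)) (fun j => ?_) ?_
    · have hx : Filter.Tendsto (fun i => cexp (-(s i)) ^ (2 * (j + 1))) l
          (nhdsWithin 1 (Metric.ball 0 1)) := by
        refine tendsto_nhdsWithin_iff.2 ⟨by simpa using hq1.pow (2 * (j + 1)), ?_⟩
        filter_upwards [hs] with i hi
        rw [mem_ball_zero_iff, norm_pow, hnq]
        exact pow_lt_one₀ (Real.exp_pos _).le (by simpa using hi) (by omega)
      have hT := (T_lim p).comp hx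
      have hN : ((2 * (j + 1) : ℕ) : ℂ) ≠ 0 := Nat.cast_ne_zero.2 (by omega)
      have hsl := (exp_slope (2 * (j + 1))).comp
        (tendsto_nhdsWithin_iff.2 ⟨h0, hs0⟩)
      have h1 := (hr.div hsl hN).pow p
      have h2 := hq1.pow ((j + 1) * (2 * j + 1))
      have h3 := (h2.mul (hT.mul h1)).const_mul ((-1 : ℂ) ^ j)
      rw [one_pow, one_mul] at h3
      push_cast at h3
      refine h3.congr' ?_
      filter_upwards [hs0, hs] with i hi hi'
      have hne : 1 - cexp (-(s i)) ^ (2 * (j + 1)) ≠ 0 := by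
        intro h
        have h4 : ‖cexp (-(s i)) ^ (2 * (j + 1))‖ < 1 := by
          rw [norm_pow, hnq]
          exact pow_lt_one₀ (Real.exp_pos _).le (by simpa using hi') (by omega)
        rw [← sub_eq_zero.1 h] at h4; simp at h4
      simp only [Function.comp, Pi.div_apply]
      generalize cexp (-(s i)) ^ (2 * (j + 1)) = x at *
      rw [div_div_div_cancel_right₀ hi, div_pow, pow_succ]
      have := pow_ne_zero p hne
      field_simp
    · filter_upwards [hs, hre.eventually (ge_mem_nhds one_pos)] with i hi hi1 j
      exact GS_term_bound hp hi hi1 (hnq i) j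
  refine hlem.congr fun i => ?_
  rw [GS, tsum_mul_left]

lemma alt_sum (ℓ : ℕ) (hℓ : 1 ≤ ℓ) :
    HasSum (fun j : ℕ => (-1 : ℝ) ^ j * (1 / ((j:ℝ) + 1) ^ (2 * ℓ)))
      ((-1) ^ ℓ * (2 * Real.pi) ^ (2 * ℓ) / 2 / (2 * ℓ).factorial *
        (((Polynomial.bernoulli (2 * ℓ)).eval (1 / 2 : ℚ) : ℚ) : ℝ)) := by
  have h := hasSum_one_div_nat_pow_mul_cos (k := ℓ) (by omega) (x := 1 / 2) (by constructor <;> norm_num)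
  have e : Polynomial.eval (1 / 2 : ℝ) (Polynomial.map (algebraMap ℚ ℝ) (Polynomial.bernoulli (2 * ℓ)))
      = (((Polynomial.bernoulli (2 * ℓ)).eval (1 / 2 : ℚ) : ℚ) : ℝ) := by
    rw [show (1 / 2 : ℝ) = algebraMap ℚ ℝ (1 / 2) by simp, Polynomial.eval_map_algebraMap,
      Polynomial.aeval_algebraMap_apply]
    simp
  rw [e, ← hasSum_nat_add_iff' 1] at h
  have h2 := h.neg
  have e2 : (fun j : ℕ => (-1 : ℝ) ^ j * (1 / ((j:ℝ) + 1) ^ (2 * ℓ))) =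
      fun n : ℕ => -(1 / ((n + 1 : ℕ) : ℝ) ^ (2 * ℓ) * Real.cos (2 * Real.pi * ((n + 1 : ℕ) : ℝ) * (1 / 2))) := by
    funext n
    rw [show 2 * Real.pi * ((n + 1 : ℕ) : ℝ) * (1 / 2) = ((n + 1 : ℕ) : ℝ) * Real.pi by ring,
      Real.cos_nat_mul_pi, pow_succ]
    push_cast; ring
  rw [e2]
  refine (fun (f : ℕ → ℝ) (a b : ℝ) (hab : b = a) (hf : HasSum f a) => (hab ▸ hf : HasSum f b))
    _ _ _ ?_ h2
  have : 2 * ℓ ≠ 0 := by omega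
  rw [Finset.sum_range_one, Nat.cast_zero, zero_pow this, div_zero, zero_mul, sub_zero, pow_succ]
  ring

lemma bern_const (ℓ : ℕ) (hℓ : 1 ≤ ℓ) :
    2 * (∑' j : ℕ, (-1 : ℂ) ^ j * ((2 * ℓ).factorial * (1 / (2 * ((j:ℂ) + 1))) ^ (2 * ℓ))) =
      (((-1 : ℝ) ^ ℓ * Real.pi ^ (2 * ℓ) *
        (((Polynomial.bernoulli (2 * ℓ)).eval (1 / 2 : ℚ) : ℚ) : ℝ) : ℝ) : ℂ) := by
  have h := (alt_sum ℓ hℓ).mul_left (2 * ((2 * ℓ).factorial / 2 ^ (2 * ℓ)) : ℝ)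
  have hf : ((2 * ℓ).factorial : ℝ) ≠ 0 := by positivity
  rw [show (2 * ((2 * ℓ).factorial / 2 ^ (2 * ℓ)) : ℝ) * ((-1) ^ ℓ * (2 * Real.pi) ^ (2 * ℓ) / 2 / (2 * ℓ).factorial *
        (((Polynomial.bernoulli (2 * ℓ)).eval (1 / 2 : ℚ) : ℚ) : ℝ)) = ((-1 : ℝ) ^ ℓ * Real.pi ^ (2 * ℓ) *
        (((Polynomial.bernoulli (2 * ℓ)).eval (1 / 2 : ℚ) : ℚ) : ℝ)) by
      rw [mul_pow 2 Real.pi]; field_simp] at h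
  rw [← Complex.hasSum_ofReal] at h
  rw [← h.tsum_eq, ← tsum_mul_left]
  refine tsum_congr fun j => ?_
  push_cast
  rw [one_div_pow, mul_pow]
  have : (j : ℂ) + 1 ≠ 0 := by exact_mod_cast Nat.succ_ne_zero j
  field_simp

lemma bern_ne (ℓ : ℕ) (hℓ : 1 ≤ ℓ) :
    (((Polynomial.bernoulli (2 * ℓ)).eval (1 / 2 : ℚ) : ℚ) : ℝ) ≠ 0 := by
  have h := alt_sum ℓ hℓ
  intro h0
  rw [h0, mul_zero] at h
  have ha : Antitone (fun j : ℕ => 1 / ((j:ℝ) + 1) ^ (2 * ℓ)) := by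
    intro a b hab
    have : (a:ℝ) ≤ b := by exact_mod_cast hab
    apply one_div_le_one_div_of_le (by positivity)
    gcongr
  have h2 := ha.alternating_series_le_tendsto h.tendsto_sum_nat 1
  rw [show 2 * 1 = 2 from rfl, Finset.sum_range_succ, Finset.sum_range_one] at h2
  norm_num at h2
  have h3 : (1:ℝ) < 2 ^ (2 * ℓ) := one_lt_pow₀ (by norm_num) (by omega)
  have h4 : ((2:ℝ) ^ (2 * ℓ))⁻¹ < 1 := inv_lt_one_of_one_lt₀ h3
  linarith

end N2

namespace N2

open Complex

noncomputable def cc (p n : ℕ) : ℕ :=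
  ∑ P : n.Partition, if NoRepeatedOddParts P then (aR P.parts) ^ p else 0

lemma m2Rank_pow {n : ℕ} (P : n.Partition) (ℓ : ℕ) :
    m2Rank P ^ (2 * ℓ) = ((aR P.parts ^ (2 * ℓ) : ℕ) : ℤ) := by
  rw [Nat.cast_pow, aR, Int.natCast_natAbs, pow_mul, pow_mul, sq_abs]
  rfl

lemma N2moment_eq (ℓ n : ℕ) : N2moment ℓ n = (cc (2 * ℓ) n : ℤ) := by
  have h1 : ∀ m : ℤ, m ^ (2 * ℓ) * (N2exact m n : ℤ) =
      ∑ P : n.Partition, if m = m2Rank P then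
        (if NoRepeatedOddParts P then m2Rank P ^ (2 * ℓ) else 0) else 0 := by
    intro m
    rw [N2exact, Nat.card_eq_fintype_card, Fintype.card_subtype, Finset.card_filter, Nat.cast_sum,
      Finset.mul_sum]
    refine Finset.sum_congr rfl fun P _ => ?_
    by_cases a : m = m2Rank P
    · by_cases b : NoRepeatedOddParts P
      · simp [a, b]
      · simp [a, b]
    · have a' : ¬ (m2Rank P = m) := fun h => a h.symm
      simp [a, a']
  rw [N2moment, tsum_congr h1, Summable.tsum_finsetSum]
  · rw [cc, Nat.cast_sum]
    refine Finset.sum_congr rfl fun P _ => ?_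
    rw [tsum_ite_eq, m2Rank_pow]
    split_ifs <;> simp
  · intro P _
    exact (hasSum_ite_eq _ _).summable

lemma mem_Pset_parts {n : ℕ} (P : n.Partition) : P.parts ∈ Pset ↔ NoRepeatedOddParts P := by
  constructor
  · exact fun h => h.2
  · exact fun h => ⟨fun h0 => absurd (P.parts_pos h0) (lt_irrefl _), h⟩

lemma Mom_summable {q : ℂ} (hq : ‖q‖ < 1) (p : ℕ) :
    Summable (fun M => Pset.indicator (fun M => ((aR M : ℕ) : ℂ) ^ p * q ^ M.sum) M) := by
  refine Summable.of_norm ?_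
  refine (summable_mom p (norm_nonneg q) hq).congr fun M => ?_
  by_cases hM : M ∈ Pset
  · simp [Set.indicator_of_mem hM]
  · simp [Set.indicator_of_notMem hM]

lemma Mom_hasSum {q : ℂ} (hq : ‖q‖ < 1) (p : ℕ) :
    HasSum (fun n : ℕ => (cc p n : ℂ) * q ^ n) (Mom q p) := by
  have h := (Mom_summable hq p).hasSum.tsum_fiberwise Multiset.sum
  refine (hasSum_congr' fun n => ?_).mpr h
  let g : n.Partition → (Multiset.sum ⁻¹' {n} : Set (Multiset ℕ)) := fun P => ⟨P.parts, P.parts_sum⟩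
  have hg : Function.Injective g := by
    intro P Q hPQ
    have := congrArg Subtype.val hPQ
    exact Nat.Partition.ext this
  have := hg.tsum_eq (f := fun M : (Multiset.sum ⁻¹' {n} : Set (Multiset ℕ)) =>
    Pset.indicator (fun M => ((aR M : ℕ) : ℂ) ^ p * q ^ M.sum) (M : Multiset ℕ)) (by
      rintro ⟨M, hM⟩ hMs
      have hMP : M ∈ Pset := by
        by_contra hcon
        simp [hcon] at hMs
      refine ⟨⟨M, fun {i} hi => Nat.pos_of_ne_zero fun h0 => hMP.1 (h0 ▸ hi), hM⟩, rfl⟩)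
  rw [← this, tsum_fintype, cc, Nat.cast_sum, Finset.sum_mul]
  refine Finset.sum_congr rfl fun P _ => ?_
  simp only [g]
  by_cases hP : NoRepeatedOddParts P
  · rw [if_pos hP, Set.indicator_of_mem ((mem_Pset_parts P).2 hP), P.parts_sum, Nat.cast_pow]
  · rw [if_neg hP, Set.indicator_of_notMem (fun h => hP ((mem_Pset_parts P).1 h))]
    simp

lemma fourier_int (k : ℤ) : ∫ θ in (-Real.pi)..Real.pi, cexp ((k : ℂ) * I * θ) =
    if k = 0 then 2 * Real.pi else 0 := by
  split_ifs with h
  · subst h; simp; ring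
  · have hc : (k : ℂ) * I ≠ 0 := mul_ne_zero (by exact_mod_cast h) I_ne_zero
    rw [integral_exp_mul_complex hc]
    have : cexp ((k : ℂ) * I * Real.pi) = cexp ((k : ℂ) * I * ((-Real.pi : ℝ) : ℂ)) := by
      rw [Complex.exp_eq_exp_iff_exists_int]
      refine ⟨k, ?_⟩
      push_cast; ring
    rw [this]; simp

lemma fourier (p n : ℕ) {t : ℝ} (ht : 0 < t) :
    ∫ θ in (-Real.pi)..Real.pi, Mom (cexp (-(t - θ * I))) p * cexp (n * (t - θ * I)) =
      2 * Real.pi * cc p n := by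
  have hn : ∀ θ : ℝ, ‖cexp (-((t:ℂ) - θ * I))‖ = Real.exp (-t) := by
    intro θ; rw [Complex.norm_exp]; simp
  have hn2 : ∀ θ : ℝ, ‖cexp ((n:ℂ) * ((t:ℂ) - θ * I))‖ = Real.exp (n * t) := by
    intro θ; rw [Complex.norm_exp]; simp
  have h1 : Real.exp (-t) < 1 := by simpa using ht
  have hq : ∀ θ : ℝ, ‖cexp (-((t:ℂ) - θ * I))‖ < 1 := fun θ => by rw [hn]; exact h1
  have hcs : Summable (fun m : ℕ => (cc p m : ℝ) * Real.exp (-t) ^ m * Real.exp (n * t)) := by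
    have := (Mom_hasSum (hq 0) p).summable.norm.mul_right (Real.exp (n * t))
    refine this.congr fun m => ?_
    rw [norm_mul, norm_pow, hn]; simp
  have key := intervalIntegral.hasSum_integral_of_dominated_convergence
    (μ := MeasureTheory.volume) (a := -Real.pi) (b := Real.pi)
    (F := fun (m : ℕ) (θ : ℝ) => ((cc p m : ℂ) * cexp (-((t:ℂ) - θ * I)) ^ m) * cexp (n * (t - θ * I)))
    (f := fun θ : ℝ => Mom (cexp (-((t:ℂ) - θ * I))) p * cexp (n * (t - θ * I)))
    (fun m _ => (cc p m : ℝ) * Real.exp (-t) ^ m * Real.exp (n * t))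
    (fun m => by
      apply Continuous.aestronglyMeasurable
      fun_prop)
    (fun m => by
      refine Filter.Eventually.of_forall fun θ _ => ?_
      rw [norm_mul, norm_mul, norm_pow, hn, hn2]
      simp)
    (Filter.Eventually.of_forall fun θ _ => hcs)
    (by simp)
    (Filter.Eventually.of_forall fun θ _ => (Mom_hasSum (hq θ) p).mul_right _)
  refine key.unique ?_
  have h2 : ∀ m : ℕ, ∫ θ in (-Real.pi)..Real.pi,
      ((cc p m : ℂ) * cexp (-((t:ℂ) - θ * I)) ^ m) * cexp (n * (t - θ * I)) =
      if m = n then 2 * Real.pi * (cc p n : ℂ) else 0 := by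
    intro m
    have h3 : ∀ θ : ℝ, ((cc p m : ℂ) * cexp (-((t:ℂ) - θ * I)) ^ m) * cexp (n * (t - θ * I)) =
        ((cc p m : ℂ) * cexp (((n:ℂ) - m) * t)) * cexp ((((m:ℤ) - (n:ℤ) : ℤ) : ℂ) * I * θ) := by
      intro θ
      rw [← Complex.exp_nat_mul, mul_assoc, mul_assoc, ← Complex.exp_add, ← Complex.exp_add]
      congr 2
      push_cast; ring
    simp_rw [h3]
    rw [intervalIntegral.integral_const_mul, fourier_int]
    by_cases hmn : m = n
    · subst hmn; simp; ring
    · have : ((m:ℤ) - (n:ℤ)) ≠ 0 := by omega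
      simp [hmn, this]
  simp_rw [h2]
  exact hasSum_ite_eq n _

end N2

namespace N2

open Complex

noncomputable def sv (t v : ℝ) : ℂ := (t : ℂ) - ((t * Real.sqrt t * v : ℝ) : ℂ) * I

noncomputable def uv (t v : ℝ) : ℂ := 1 - ((Real.sqrt t * v : ℝ) : ℂ) * I

lemma sv_eq (t v : ℝ) : sv t v = t * uv t v := by
  rw [sv, uv]; push_cast; ring

lemma sv_re (t v : ℝ) : (sv t v).re = t := by simp [sv]

lemma uv_ne (t v : ℝ) : uv t v ≠ 0 := by
  intro h
  have := congrArg Complex.re h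
  simp [uv] at this

lemma t_lim : Filter.Tendsto (fun t : ℝ => t) (nhdsWithin 0 (Set.Ioi 0)) (nhds 0) :=
  Filter.tendsto_id.mono_left nhdsWithin_le_nhds

lemma uv_lim (v : ℝ) : Filter.Tendsto (fun t => uv t v) (nhdsWithin 0 (Set.Ioi 0)) (nhds 1) := by
  have h1 : Continuous (fun t => uv t v) := by unfold uv; fun_prop
  have h2 : uv 0 v = 1 := by simp [uv]
  rw [← h2]
  exact (h1.tendsto 0).mono_left nhdsWithin_le_nhds

lemma sv_lim (v : ℝ) : Filter.Tendsto (fun t => sv t v) (nhdsWithin 0 (Set.Ioi 0)) (nhds 0) := by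
  have h1 : Continuous (fun t => sv t v) := by unfold sv; fun_prop
  have h2 : sv 0 v = 0 := by simp [sv]
  rw [← h2]
  exact (h1.tendsto 0).mono_left nhdsWithin_le_nhds

lemma sv_pos (v : ℝ) : ∀ᶠ t in nhdsWithin (0:ℝ) (Set.Ioi 0), 0 < (sv t v).re := by
  filter_upwards [self_mem_nhdsWithin] with t ht
  rw [sv_re]; exact ht

lemma sv_ratio (v : ℝ) : Filter.Tendsto (fun t => ((sv t v).re : ℂ) / sv t v)
    (nhdsWithin 0 (Set.Ioi 0)) (nhds 1) := by
  have h := (uv_lim v).inv₀ one_ne_zero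
  rw [inv_one] at h
  refine h.congr' ?_
  filter_upwards [self_mem_nhdsWithin] with t ht
  have ht0 : (t : ℂ) ≠ 0 := by exact_mod_cast (ne_of_gt ht)
  rw [sv_re, sv_eq]
  field_simp

lemma sv_inv (v : ℝ) : Filter.Tendsto (fun t => (1 / sv t v).re)
    (nhdsWithin 0 (Set.Ioi 0)) Filter.atTop := by
  have h := (uv_lim v).inv₀ one_ne_zero
  have h2 := (Complex.continuous_re.tendsto _).comp h
  rw [inv_one, Complex.one_re] at h2
  have h3 := (tendsto_inv_nhdsGT_zero (𝕜 := ℝ)).atTop_mul_pos one_pos h2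
  refine h3.congr' ?_
  filter_upwards [self_mem_nhdsWithin] with t ht
  simp only [Function.comp]
  rw [sv_eq, ← Complex.re_ofReal_mul]
  congr 1
  push_cast
  rw [one_div, mul_inv]

noncomputable def AA (s : ℂ) : ℂ := W (cexp (-s)) Pset *
      cexp (-(Real.pi ^ 2 / (8 * s))) / (2 * s / Real.pi) ^ (1 / 2 : ℂ)

noncomputable def cA : ℂ := cexp (I * Real.pi / 4) / (1 + I)

lemma one_add_I_ne : (1 + I : ℂ) ≠ 0 := by
  intro h; have := congrArg Complex.re h; simp at this

lemma cA_ne : cA ≠ 0 := div_ne_zero (Complex.exp_ne_zero _) one_add_I_ne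

lemma AA_lim (v : ℝ) : Filter.Tendsto (fun t => AA (sv t v))
    (nhdsWithin 0 (Set.Ioi 0)) (nhds cA) :=
  W_asymp (sv_pos v) (sv_lim v) (sv_inv v)

lemma sv_zero (t : ℝ) : sv t 0 = t := by simp [sv]

lemma AA_lim0 : Filter.Tendsto (fun t : ℝ => AA t) (nhdsWithin 0 (Set.Ioi 0)) (nhds cA) := by
  have := AA_lim 0
  simpa only [sv_zero] using this

lemma W_eq {s : ℂ} (hs : s ≠ 0) : W (cexp (-s)) Pset =
    AA s * cexp (Real.pi ^ 2 / (8 * s)) * (2 * s / Real.pi) ^ (1 / 2 : ℂ) := by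
  have hpi : (Real.pi : ℂ) ≠ 0 := by exact_mod_cast Real.pi_ne_zero
  have hp : (2 * s / Real.pi) ^ (1 / 2 : ℂ) ≠ 0 := by
    rw [Complex.cpow_ne_zero_iff]
    left
    exact div_ne_zero (mul_ne_zero two_ne_zero hs) hpi
  rw [AA, Complex.exp_neg (Real.pi ^ 2 / (8 * s))]
  have := Complex.exp_ne_zero (Real.pi ^ 2 / (8 * s))
  generalize cexp (Real.pi ^ 2 / (8 * s)) = a at *
  generalize (2 * s / Real.pi) ^ (1 / 2 : ℂ) = b at *
  field_simp

lemma cpow_split {r : ℝ} (hr : 0 < r) {z : ℂ} (hz : z ≠ 0) :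
    ((r : ℂ) * z) ^ (1 / 2 : ℂ) = (r : ℂ) ^ (1 / 2 : ℂ) * z ^ (1 / 2 : ℂ) := by
  have hr0 : (r : ℂ) ≠ 0 := by exact_mod_cast hr.ne'
  rw [Complex.cpow_def_of_ne_zero (mul_ne_zero hr0 hz), Complex.cpow_def_of_ne_zero hr0,
    Complex.cpow_def_of_ne_zero hz, Complex.log_ofReal_mul hr hz, ← Complex.exp_add,
    Complex.ofReal_log hr.le]
  congr 1; ring

lemma W_ratio {t : ℝ} (ht : 0 < t) (v : ℝ) (hA : AA t ≠ 0) :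
    W (cexp (-(sv t v))) Pset / W (cexp (-t)) Pset *
      cexp (-(Real.pi ^ 2 / (8 * t ^ 2) * (t * Real.sqrt t * v : ℝ)) * I) =
    AA (sv t v) / AA t * cexp (-(Real.pi ^ 2 / 8 * v ^ 2) / uv t v) * (uv t v) ^ (1 / 2 : ℂ) := by
  have hpi : (Real.pi : ℂ) ≠ 0 := by exact_mod_cast Real.pi_ne_zero
  have ht0 : (t : ℂ) ≠ 0 := by exact_mod_cast ht.ne'
  have hu := uv_ne t v
  have hs : sv t v ≠ 0 := by rw [sv_eq]; exact mul_ne_zero ht0 hu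
  rw [W_eq hs, W_eq ht0]
  have h2 : 2 * sv t v / Real.pi = ((2 * t / Real.pi : ℝ) : ℂ) * uv t v := by
    rw [sv_eq]; push_cast; ring
  have h3 : (2 * (t:ℂ) / Real.pi) = ((2 * t / Real.pi : ℝ) : ℂ) := by push_cast; ring
  have hr : 0 < 2 * t / Real.pi := by have := Real.pi_pos; positivity
  rw [h2, h3, cpow_split hr hu]
  have hp : ((2 * t / Real.pi : ℝ) : ℂ) ^ (1 / 2 : ℂ) ≠ 0 := by
    rw [Complex.cpow_ne_zero_iff]
    left
    exact_mod_cast hr.ne'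
  have he : cexp (Real.pi ^ 2 / (8 * sv t v)) * cexp (-(Real.pi ^ 2 / (8 * t ^ 2) * (t * Real.sqrt t * v : ℝ)) * I)
      = cexp (-(Real.pi ^ 2 / 8 * v ^ 2) / uv t v) * cexp (Real.pi ^ 2 / (8 * t)) := by
    rw [← Complex.exp_add, ← Complex.exp_add]
    congr 1
    rw [sv_eq]
    have hsq : ((Real.sqrt t : ℝ) : ℂ) ^ 2 = t := by
      rw [← Complex.ofReal_pow, Real.sq_sqrt ht.le]
    have huu : uv t v = 1 - ((Real.sqrt t : ℝ) : ℂ) * v * I := by rw [uv]; push_cast; ring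
    push_cast
    generalize ((Real.sqrt t : ℝ) : ℂ) = w at *
    generalize uv t v = u at *
    rw [← hsq] at ht0 ⊢
    have hw : w ≠ 0 := by rintro rfl; simp at ht0
    field_simp
    rw [huu]
    linear_combination (w ^ 2 * v ^ 2) * I_sq
  have hE := Complex.exp_ne_zero (Real.pi ^ 2 / (8 * (t:ℂ)))
  generalize cexp (Real.pi ^ 2 / (8 * (t:ℂ))) = a at *
  generalize cexp (Real.pi ^ 2 / (8 * sv t v)) = b at *
  generalize cexp (-(Real.pi ^ 2 / (8 * (t:ℂ) ^ 2) * (t * Real.sqrt t * v : ℝ)) * I) = c at *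
  generalize cexp (-(Real.pi ^ 2 / 8 * (v:ℂ) ^ 2) / uv t v) = d at *
  generalize ((2 * t / Real.pi : ℝ) : ℂ) ^ (1 / 2 : ℂ) = e at *
  generalize (uv t v) ^ (1 / 2 : ℂ) = f at *
  generalize AA (sv t v) = g at *
  generalize AA (t:ℂ) = k at *
  field_simp
  linear_combination g * f * he

lemma W_ratio_lim (v : ℝ) : Filter.Tendsto (fun t : ℝ =>
    W (cexp (-(sv t v))) Pset / W (cexp (-t)) Pset *
      cexp (-(Real.pi ^ 2 / (8 * t ^ 2) * (t * Real.sqrt t * v : ℝ)) * I))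
    (nhdsWithin 0 (Set.Ioi 0)) (nhds (cexp (-(Real.pi ^ 2 / 8 * v ^ 2)))) := by
  have h1 := (AA_lim v).div AA_lim0 cA_ne
  have h2 : Filter.Tendsto (fun t => cexp (-(Real.pi ^ 2 / 8 * v ^ 2) / uv t v))
    (nhdsWithin 0 (Set.Ioi 0)) (nhds (cexp (-(Real.pi ^ 2 / 8 * v ^ 2) / 1))) :=
    (tendsto_const_nhds.div (uv_lim v) one_ne_zero).cexp
  have h3 : Filter.Tendsto (fun t => (uv t v) ^ (1 / 2 : ℂ))
    (nhdsWithin 0 (Set.Ioi 0)) (nhds (1 ^ (1 / 2 : ℂ))) := by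
    have h := (continuousAt_cpow_const (a := (1:ℂ)) (b := (1 / 2 : ℂ)) (by simp [Complex.slitPlane])).tendsto
    exact h.comp (uv_lim v)
  have h4 := (h1.mul h2).mul h3
  rw [div_self cA_ne, one_mul, div_one, Complex.one_cpow, mul_one] at h4
  refine h4.congr' ?_
  filter_upwards [self_mem_nhdsWithin, AA_lim0.eventually_ne cA_ne] with t ht hA
  exact (W_ratio ht v hA).symm

lemma E_dom {t v : ℝ} (ht : 0 < t) (hv : |t * Real.sqrt t * v| ≤ Real.pi) :
    Real.exp (-(v ^ 2 / (160 * (1 + t * v ^ 2)))) ≤ 3 * 10 ^ 10 * (1 + v ^ 2)⁻¹ := by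
  have hpi : Real.pi ^ 2 ≤ 10 := by nlinarith [Real.pi_lt_d2, Real.pi_pos]
  have h1 : t ^ 3 * v ^ 2 ≤ 10 := by
    have : (t * Real.sqrt t * v) ^ 2 ≤ Real.pi ^ 2 := sq_le_sq.2 (by rwa [abs_of_pos Real.pi_pos])
    have e : (t * Real.sqrt t * v) ^ 2 = t ^ 3 * v ^ 2 := by
      rw [mul_pow, mul_pow, Real.sq_sqrt ht.le]; ring
    linarith
  set y := t * v ^ 2 with hy
  have hy0 : 0 ≤ y := by positivity
  have hy3 : y ^ 3 ≤ 10 * (v ^ 2) ^ 2 := by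
    have : y ^ 3 = t ^ 3 * v ^ 2 * (v ^ 2) ^ 2 := by rw [hy]; ring
    rw [this]
    exact mul_le_mul_of_nonneg_right h1 (by positivity)
  set x := v ^ 2 with hx
  have hx0 : 0 ≤ x := by positivity
  set E := x / (160 * (1 + y)) with hE
  have hE0 : 0 ≤ E := by positivity
  rw [← div_eq_mul_inv, le_div_iff₀ (by positivity)]
  rcases le_or_gt x 1 with hx1 | hx1
  · have : Real.exp (-E) ≤ 1 := by rw [Real.exp_le_one_iff]; linarith
    nlinarith
  · have h3 := Real.pow_div_factorial_le_exp E hE0 3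
    have h4 : (1 + y) ^ 3 ≤ 44 * x ^ 2 := by
      have : (1 + y) ^ 3 ≤ 4 * (1 + y ^ 3) := by nlinarith [mul_nonneg hy0 (sq_nonneg (y - 1)), sq_nonneg (y - 1)]
      nlinarith
    have h5 : x ≤ 44 * 160 ^ 3 * E ^ 3 := by
      rw [hE, div_pow, mul_pow, mul_div_assoc', le_div_iff₀ (by positivity)]
      have : x * (1 + y) ^ 3 ≤ x * (44 * x ^ 2) := mul_le_mul_of_nonneg_left h4 hx0
      nlinarith
    have h6 : Real.exp (-E) * (1 + x) ≤ Real.exp (-E) * (12 * (44 * 160 ^ 3) * Real.exp E) := by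
      refine mul_le_mul_of_nonneg_left ?_ (Real.exp_pos _).le
      norm_num [Nat.factorial] at h3 ⊢
      linarith
    refine h6.trans ?_
    rw [show Real.exp (-E) * (12 * (44 * 160 ^ 3) * Real.exp E) = 12 * (44 * 160 ^ 3) * (Real.exp (-E) * Real.exp E) by ring,
      ← Real.exp_add]
    norm_num

lemma W_ratio_bound {t v : ℝ} (ht : 0 < t) (ht1 : t ≤ 1) (hv : |t * Real.sqrt t * v| ≤ Real.pi)
    (hW : W (cexp (-t)) Pset ≠ 0) :
    ‖W (cexp (-(sv t v))) Pset / W (cexp (-t)) Pset‖ ≤ 3 * 10 ^ 10 * (1 + v ^ 2)⁻¹ := by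
  have hn : ‖cexp (-(sv t v))‖ = Real.exp (-t) := by
    rw [Complex.norm_exp, Complex.neg_re, sv_re]
  have h1 : Real.exp (-t) < 1 := by simpa using ht
  have h := W_minor (q := cexp (-(sv t v))) (by rw [hn]; exact h1)
  rw [hn] at h
  have e0 : ((Real.exp (-t) : ℝ) : ℂ) = cexp (-t) := by push_cast; rfl
  rw [e0] at h
  rw [norm_div, div_le_iff₀ (norm_pos_iff.2 hW), mul_comm]
  refine h.trans (mul_le_mul_of_nonneg_left (le_trans ?_ (E_dom ht hv)) (norm_nonneg _))
  apply Real.exp_le_exp.2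
  have h2 := E_bound t (t * Real.sqrt t * v) ht ht1 hv
  have e1 : (t * Real.sqrt t * v) ^ 2 / (t * (t ^ 2 + (t * Real.sqrt t * v) ^ 2)) / 40 =
      4 * (v ^ 2 / (160 * (1 + t * v ^ 2))) := by
    rw [mul_pow, mul_pow, Real.sq_sqrt ht.le]
    have : 0 < 1 + t * v ^ 2 := by positivity
    field_simp
    ring
  rw [e1] at h2
  change _ ≤ Real.exp (-t) / (1 - Real.exp (-t) ^ 2) - (cexp (-(sv t v)) / (1 - cexp (-(sv t v)) ^ 2)).re at h2
  linarith

end N2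

namespace N2

open Complex

lemma Mom_cont (p : ℕ) {t : ℝ} (ht : 0 < t) : Continuous (fun v : ℝ => Mom (cexp (-(sv t v))) p) := by
  have hn : ∀ v, ‖cexp (-(sv t v))‖ = Real.exp (-t) := by
    intro v; rw [Complex.norm_exp, Complex.neg_re, sv_re]
  have h1 : Real.exp (-t) < 1 := by simpa using ht
  have hq : ∀ v, ‖cexp (-(sv t v))‖ < 1 := fun v => by rw [hn]; exact h1
  have e : (fun v : ℝ => Mom (cexp (-(sv t v))) p) =
      fun v => ∑' m : ℕ, (cc p m : ℂ) * cexp (-(sv t v)) ^ m := by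
    funext v
    exact (Mom_hasSum (hq v) p).tsum_eq.symm
  rw [e]
  refine continuous_tsum (u := fun m : ℕ => (cc p m : ℝ) * Real.exp (-t) ^ m) (fun m => ?_) ?_ ?_
  · unfold sv; fun_prop
  · refine (Mom_hasSum (hq 0) p).summable.norm.congr fun m => ?_
    rw [norm_mul, norm_pow, hn]; simp
  · intro m v
    rw [norm_mul, norm_pow, hn]; simp

noncomputable def Hf (p : ℕ) (t v : ℝ) : ℂ :=
  t ^ p / W (cexp (-t)) Pset * (Mom (cexp (-(sv t v))) p *
    cexp (-(Real.pi ^ 2 / (8 * t ^ 2) * (t * Real.sqrt t * v : ℝ)) * I))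

noncomputable def H (p : ℕ) (t v : ℝ) : ℂ :=
  (Set.Ioc (-(Real.pi / (t * Real.sqrt t))) (Real.pi / (t * Real.sqrt t))).indicator (Hf p t) v

lemma sv_q {t : ℝ} (ht : 0 < t) (v : ℝ) : ‖cexp (-(sv t v))‖ < 1 := by
  rw [Complex.norm_exp, Complex.neg_re, sv_re]; simpa using ht

lemma Hf_eq {p : ℕ} (hp : 1 ≤ p) {t : ℝ} (ht : 0 < t) (v : ℝ) :
    Hf p t v = (W (cexp (-(sv t v))) Pset / W (cexp (-t)) Pset *
      cexp (-(Real.pi ^ 2 / (8 * t ^ 2) * (t * Real.sqrt t * v : ℝ)) * I)) *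
      (2 * (((sv t v).re : ℂ) ^ p * GS (cexp (-(sv t v))) p)) := by
  rw [Hf, Mom_eq (sv_q ht v) hp, sv_re]
  ring

lemma W_real_ne {t : ℝ} (ht : 0 < t) : W (cexp (-t)) Pset ≠ 0 := by
  have h := W_theta (q := cexp (-(t:ℂ))) (by
    have := sv_q ht 0; rwa [sv_zero] at this)
  intro h0
  rw [h0, zero_mul] at h
  exact zero_ne_one h

noncomputable def KK (p : ℕ) : ℂ := ∑' j : ℕ, (-1 : ℂ) ^ j * (p.factorial * (1 / (2 * ((j:ℂ) + 1))) ^ p)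

lemma H_lim {p : ℕ} (hp : 2 ≤ p) : Filter.Tendsto (fun t => ∫ v, H p t v) (nhdsWithin 0 (Set.Ioi 0))
    (nhds (∫ v : ℝ, cexp (-(Real.pi ^ 2 / 8 * v ^ 2)) * (2 * KK p))) := by
  obtain ⟨C, hC0, hC⟩ := GS_bound hp
  have hle : ∀ᶠ t : ℝ in nhdsWithin 0 (Set.Ioi 0), t ≤ 1 :=
    t_lim.eventually (ge_mem_nhds one_pos)
  refine MeasureTheory.tendsto_integral_filter_of_dominated_convergence
    (fun v => 3 * 10 ^ 10 * (1 + v ^ 2)⁻¹ * (2 * C)) ?_ ?_ ?_ ?_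
  · filter_upwards [self_mem_nhdsWithin] with t ht
    have hc : Continuous (Hf p t) := by
      have := Mom_cont p ht
      unfold Hf
      fun_prop
    exact hc.aestronglyMeasurable.indicator measurableSet_Ioc
  · filter_upwards [self_mem_nhdsWithin, hle] with t ht ht1
    have ht : 0 < t := ht
    refine Filter.Eventually.of_forall fun v => ?_
    rw [H]
    by_cases hv : v ∈ Set.Ioc (-(Real.pi / (t * Real.sqrt t))) (Real.pi / (t * Real.sqrt t))
    · rw [Set.indicator_of_mem hv]
      have hd : 0 < t * Real.sqrt t := mul_pos ht (Real.sqrt_pos.2 ht)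
      have hv' : |t * Real.sqrt t * v| ≤ Real.pi := by
        rw [abs_mul, abs_of_pos hd, mul_comm, ← le_div_iff₀ hd, abs_le]
        exact ⟨hv.1.le, hv.2⟩
      rw [Hf_eq (by omega) ht, norm_mul, norm_mul, sv_re, norm_mul]
      have e1 : ‖cexp (-(Real.pi ^ 2 / (8 * t ^ 2) * (t * Real.sqrt t * v : ℝ)) * I)‖ = 1 := by
        have := Complex.norm_exp_ofReal_mul_I (-(Real.pi ^ 2 / (8 * t ^ 2) * (t * Real.sqrt t * v)))
        rw [← this]; push_cast; rfl
      rw [e1, mul_one, Complex.norm_ofNat]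
      refine mul_le_mul (W_ratio_bound ht ht1 hv' (W_real_ne ht)) ?_ (by positivity) (by positivity)
      refine mul_le_mul_of_nonneg_left ?_ (by norm_num)
      refine hC _ t ht ht1 ?_
      rw [Complex.norm_exp, Complex.neg_re, sv_re]
    · rw [Set.indicator_of_notMem hv, norm_zero]
      positivity
  · exact (integrable_inv_one_add_sq.const_mul _).mul_const _
  · refine Filter.Eventually.of_forall fun v => ?_
    have h1 := (W_ratio_lim v).mul ((GS_lim hp (sv_pos v) (sv_lim v) (sv_ratio v)).const_mul 2)
    refine h1.congr' ?_
    have hev : ∀ᶠ t : ℝ in nhdsWithin 0 (Set.Ioi 0), |t * Real.sqrt t * v| < Real.pi := by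
      have hcont : Continuous (fun t : ℝ => |t * Real.sqrt t * v|) := by fun_prop
      have := (hcont.tendsto 0).mono_left (nhdsWithin_le_nhds (s := Set.Ioi (0:ℝ)))
      simp only [zero_mul, abs_zero] at this
      exact this.eventually (gt_mem_nhds Real.pi_pos)
    filter_upwards [self_mem_nhdsWithin, hev] with t ht hvt
    have ht : 0 < t := ht
    have hd : 0 < t * Real.sqrt t := mul_pos ht (Real.sqrt_pos.2 ht)
    have hv : v ∈ Set.Ioc (-(Real.pi / (t * Real.sqrt t))) (Real.pi / (t * Real.sqrt t)) := by
      rw [abs_mul, abs_of_pos hd, mul_comm, ← lt_div_iff₀ hd, abs_lt] at hvt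
      exact ⟨hvt.1, hvt.2.le⟩
    rw [H, Set.indicator_of_mem hv, Hf_eq (by omega) ht]

lemma gauss_val (K : ℂ) : (∫ v : ℝ, cexp (-(Real.pi ^ 2 / 8 * v ^ 2)) * K) =
    (Real.sqrt (8 / Real.pi) : ℝ) * K := by
  rw [MeasureTheory.integral_mul_const]
  congr 1
  have h := integral_gaussian (Real.pi ^ 2 / 8)
  have e : Real.pi / (Real.pi ^ 2 / 8) = 8 / Real.pi := by
    have := Real.pi_pos
    field_simp
  rw [e] at h
  rw [← h, ← integral_complex_ofReal]
  congr 1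
  funext v
  push_cast
  congr 1
  ring

lemma cc_eq (p n : ℕ) {t : ℝ} (ht : 0 < t) (hn : (n : ℝ) = Real.pi ^ 2 / (8 * t ^ 2)) :
    2 * Real.pi * (cc p n : ℂ) = cexp (n * t) * W (cexp (-t)) Pset / t ^ p * (t * Real.sqrt t : ℝ) *
      ∫ v, H p t v := by
  have hd : 0 < t * Real.sqrt t := mul_pos ht (Real.sqrt_pos.2 ht)
  have hd0 : t * Real.sqrt t ≠ 0 := hd.ne'
  have hV : -(Real.pi / (t * Real.sqrt t)) ≤ Real.pi / (t * Real.sqrt t) := by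
    have := Real.pi_pos
    have : 0 < Real.pi / (t * Real.sqrt t) := by positivity
    linarith
  have h1 : ∫ v, H p t v = ∫ v in (-(Real.pi / (t * Real.sqrt t)))..(Real.pi / (t * Real.sqrt t)), Hf p t v := by
    rw [intervalIntegral.integral_of_le hV, ← MeasureTheory.integral_indicator measurableSet_Ioc]
    rfl
  have h2 := intervalIntegral.smul_integral_comp_mul_left
    (a := -(Real.pi / (t * Real.sqrt t))) (b := Real.pi / (t * Real.sqrt t))
    (fun θ : ℝ => Mom (cexp (-((t:ℂ) - θ * I))) p * cexp (n * (t - θ * I))) (t * Real.sqrt t)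
  rw [mul_neg, mul_div_cancel₀ _ hd0, fourier p n ht] at h2
  rw [← h2, h1, Complex.real_smul]
  have hW := W_real_ne ht
  have ht0 : (t : ℂ) ≠ 0 := by exact_mod_cast ht.ne'
  have hnC : (n : ℂ) = Real.pi ^ 2 / (8 * t ^ 2) := by
    rw [← Complex.ofReal_natCast, hn]; push_cast; ring
  rw [mul_comm (cexp (n * t) * W (cexp (-t)) Pset / (t:ℂ) ^ p), mul_assoc]
  congr 1
  rw [← intervalIntegral.integral_const_mul]
  refine intervalIntegral.integral_congr fun v _ => ?_
  rw [Hf]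
  change Mom (cexp (-(sv t v))) p * _ = _
  have e : cexp ((n:ℂ) * (t - ((t * Real.sqrt t * v : ℝ) : ℂ) * I)) =
      cexp (n * t) * cexp (-(Real.pi ^ 2 / (8 * t ^ 2) * (t * Real.sqrt t * v : ℝ)) * I) := by
    rw [← Complex.exp_add, ← hnC]; congr 1; ring
  rw [e]
  have htp := pow_ne_zero p ht0
  generalize cexp ((n:ℂ) * t) = a at *
  generalize cexp (-(Real.pi ^ 2 / (8 * (t:ℂ) ^ 2) * (t * Real.sqrt t * v : ℝ)) * I) = b at *
  generalize Mom (cexp (-(sv t v))) p = c at *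
  generalize W (cexp (-t)) Pset = d at *
  field_simp

lemma cA_val : cA * (Real.sqrt 2 : ℝ) = 1 := by
  have h2 : ((Real.sqrt 2 : ℝ) : ℂ) ^ 2 = 2 := by
    rw [← Complex.ofReal_pow, Real.sq_sqrt (by norm_num)]; norm_num
  rw [cA, show I * Real.pi / 4 = ((Real.pi / 4 : ℝ) : ℂ) * I by push_cast; ring, Complex.exp_mul_I,
    ← Complex.ofReal_cos, ← Complex.ofReal_sin, Real.cos_pi_div_four, Real.sin_pi_div_four]
  have := one_add_I_ne
  field_simp
  push_cast
  linear_combination (1 / 2 : ℂ) * h2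

theorem main_thm (ℓ : ℕ) (hℓ : 1 ≤ ℓ) :
    Filter.Tendsto
      (fun n : ℕ =>
        (N2moment ℓ n : ℝ) /
          ((-1 : ℝ) ^ ℓ * Real.sqrt 2 * (8 * (n : ℝ)) ^ (ℓ - 1) *
            (((Polynomial.bernoulli (2 * ℓ)).eval (1 / 2 : ℚ) : ℚ) : ℝ) *
            Real.exp (Real.pi * Real.sqrt ((n : ℝ) / 2))))
      Filter.atTop (nhds 1) := by
  have hB := bern_ne ℓ hℓ
  have hK := bern_const ℓ hℓ
  have hH := H_lim (p := 2 * ℓ) (by omega)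
  rw [gauss_val] at hH
  change 2 * KK (2 * ℓ) = _ at hK
  rw [hK] at hH
  generalize (((Polynomial.bernoulli (2 * ℓ)).eval (1 / 2 : ℚ) : ℚ) : ℝ) = B at *
  have hpi := Real.pi_pos
  have hpiC : (Real.pi : ℂ) ≠ 0 := by exact_mod_cast hpi.ne'
  have hBC : (B : ℂ) ≠ 0 := by exact_mod_cast hB
  have ht : Filter.Tendsto (fun n : ℕ => Real.pi / Real.sqrt (8 * n)) Filter.atTop
      (nhdsWithin 0 (Set.Ioi 0)) := by
    refine tendsto_nhdsWithin_iff.2 ⟨?_, ?_⟩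
    · refine Filter.Tendsto.const_div_atTop ?_ _
      refine Real.tendsto_sqrt_atTop.comp ?_
      exact Filter.Tendsto.const_mul_atTop (by norm_num) tendsto_natCast_atTop_atTop
    · filter_upwards [Filter.eventually_ge_atTop 1] with n hn
      have : (1:ℝ) ≤ n := by exact_mod_cast hn
      simp only [Set.mem_Ioi]
      positivity
  have hmain := ((AA_lim0.comp ht).mul (hH.comp ht)).mul_const
    (((1 / (2 * Real.pi) * Real.sqrt (2 / Real.pi) / ((-1) ^ ℓ * Real.sqrt 2 * Real.pi ^ (2 * ℓ - 2) * B) : ℝ)) : ℂ)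
  have hconst : cA * (((Real.sqrt (8 / Real.pi) : ℝ) : ℂ) * (((-1 : ℝ) ^ ℓ * Real.pi ^ (2 * ℓ) * B : ℝ) : ℂ)) *
    (((1 / (2 * Real.pi) * Real.sqrt (2 / Real.pi) / ((-1) ^ ℓ * Real.sqrt 2 * Real.pi ^ (2 * ℓ - 2) * B) : ℝ)) : ℂ)
      = 1 := by
    have e1 : Real.sqrt (8 / Real.pi) * Real.sqrt (2 / Real.pi) = 4 / Real.pi := by
      rw [← Real.sqrt_mul (by positivity), show 8 / Real.pi * (2 / Real.pi) = (4 / Real.pi) ^ 2 by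
        field_simp; norm_num, Real.sqrt_sq (by positivity)]
    have e2 : Real.pi ^ (2 * ℓ) = Real.pi ^ (2 * ℓ - 2) * Real.pi ^ 2 := by
      rw [← pow_add]; congr 1; omega
    have e3 : Real.sqrt (8 / Real.pi) * ((-1 : ℝ) ^ ℓ * Real.pi ^ (2 * ℓ) * B) *
      (1 / (2 * Real.pi) * Real.sqrt (2 / Real.pi) / ((-1) ^ ℓ * Real.sqrt 2 * Real.pi ^ (2 * ℓ - 2) * B))
        = Real.sqrt 2 := by
      have h2 : Real.sqrt 2 ^ 2 = 2 := Real.sq_sqrt (by norm_num)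
      have h2' : 0 < Real.sqrt 2 := by positivity
      rw [show Real.sqrt (8 / Real.pi) * ((-1 : ℝ) ^ ℓ * Real.pi ^ (2 * ℓ) * B) *
      (1 / (2 * Real.pi) * Real.sqrt (2 / Real.pi) / ((-1) ^ ℓ * Real.sqrt 2 * Real.pi ^ (2 * ℓ - 2) * B)) =
        (Real.sqrt (8 / Real.pi) * Real.sqrt (2 / Real.pi)) * ((-1 : ℝ) ^ ℓ * Real.pi ^ (2 * ℓ) * B) *
      (1 / (2 * Real.pi) / ((-1) ^ ℓ * Real.sqrt 2 * Real.pi ^ (2 * ℓ - 2) * B)) by ring, e1, e2]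
      have hm : (-1 : ℝ) ^ ℓ ≠ 0 := pow_ne_zero _ (by norm_num)
      have hpp : Real.pi ^ (2 * ℓ - 2) ≠ 0 := pow_ne_zero _ hpi.ne'
      field_simp
      rw [h2]
      norm_num
    rw [mul_assoc, ← Complex.ofReal_mul, ← Complex.ofReal_mul, e3, cA_val]
  rw [hconst] at hmain
  rw [← Complex.ofReal_one] at hmain
  rw [← Filter.tendsto_ofReal_iff]
  refine hmain.congr' ?_
  filter_upwards [Filter.eventually_ge_atTop 1] with n hn1
  have hn1' : (1:ℝ) ≤ n := by exact_mod_cast hn1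
  simp only [Function.comp]
  set t := Real.pi / Real.sqrt (8 * n) with htdef
  have ht0 : 0 < t := by positivity
  have htsq : t ^ 2 = Real.pi ^ 2 / (8 * n) := by
    rw [htdef, div_pow, Real.sq_sqrt (by positivity)]
  have hn : (n : ℝ) = Real.pi ^ 2 / (8 * t ^ 2) := by
    rw [htsq]; field_simp
  have h8n : 8 * (n:ℝ) = Real.pi ^ 2 / t ^ 2 := by
    rw [htsq]; field_simp
  have hexp : Real.pi * Real.sqrt ((n:ℝ) / 2) = n * t + Real.pi ^ 2 / (8 * t) := by
    have e1 : Real.pi ^ 2 / (8 * t) = n * t := by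
      rw [hn]; field_simp
    have e2 : Real.sqrt (8 * n) = 4 * Real.sqrt ((n:ℝ) / 2) := by
      rw [show 8 * (n:ℝ) = 4 ^ 2 * (n / 2) by ring, Real.sqrt_mul (by norm_num), Real.sqrt_sq (by norm_num)]
    have e3 : Real.sqrt ((n:ℝ) / 2) ^ 2 = n / 2 := Real.sq_sqrt (by positivity)
    have e4 : 0 < Real.sqrt ((n:ℝ) / 2) := by positivity
    rw [e1, htdef, e2]
    field_simp
    rw [e3]; ring
  have hcc := cc_eq (2 * ℓ) n ht0 hn
  have htC : (t : ℂ) ≠ 0 := by exact_mod_cast ht0.ne'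
  rw [W_eq htC] at hcc
  have hcp : (2 * (t:ℂ) / Real.pi) ^ (1 / 2 : ℂ) * (t * Real.sqrt t : ℝ) = ((Real.sqrt (2 / Real.pi) * t ^ 2 : ℝ) : ℂ) := by
    rw [show (2 * (t:ℂ) / Real.pi) = ((2 * t / Real.pi : ℝ) : ℂ) by push_cast; ring,
      show (1 / 2 : ℂ) = ((1 / 2 : ℝ) : ℂ) by push_cast; ring, ← Complex.ofReal_cpow (by positivity),
      ← Complex.ofReal_mul, ← Real.sqrt_eq_rpow]
    congr 1
    rw [show 2 * t / Real.pi = (2 / Real.pi) * t by ring, Real.sqrt_mul (by positivity)]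
    have : Real.sqrt t * Real.sqrt t = t := Real.mul_self_sqrt ht0.le
    linear_combination (Real.sqrt (2 / Real.pi) * t) * this
  have hex2 : cexp (n * t) * cexp (Real.pi ^ 2 / (8 * t)) = ((Real.exp (Real.pi * Real.sqrt ((n:ℝ) / 2)) : ℝ) : ℂ) := by
    rw [hexp, ← Complex.exp_add]; push_cast; rfl
  have hcc2 : 2 * Real.pi * (cc (2 * ℓ) n : ℂ) = AA t * (∫ v, H (2 * ℓ) t v) *
      ((Real.exp (Real.pi * Real.sqrt ((n:ℝ) / 2)) : ℝ) : ℂ) * ((Real.sqrt (2 / Real.pi) * t ^ 2 : ℝ) : ℂ) / t ^ (2 * ℓ) := by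
    rw [hcc, ← hex2, ← hcp]; ring
  have hnm : ((N2moment ℓ n : ℝ) : ℂ) = (cc (2 * ℓ) n : ℂ) := by
    rw [N2moment_eq]; push_cast; rfl
  have hpow : (8 * (n:ℝ)) ^ (ℓ - 1) * t ^ (2 * ℓ) = Real.pi ^ (2 * ℓ - 2) * t ^ 2 := by
    rw [h8n, div_pow, ← pow_mul, ← pow_mul, show 2 * (ℓ - 1) = 2 * ℓ - 2 by omega]
    rw [show 2 * ℓ = (2 * ℓ - 2) + 2 by omega, pow_add, show 2 * ℓ - 2 + 2 - 2 = 2 * ℓ - 2 by omega]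
    field_simp
  have hfin : (cc (2 * ℓ) n : ℂ) = AA t * (∫ v, H (2 * ℓ) t v) *
      ((Real.exp (Real.pi * Real.sqrt ((n:ℝ) / 2)) : ℝ) : ℂ) * ((Real.sqrt (2 / Real.pi) * t ^ 2 : ℝ) : ℂ) / t ^ (2 * ℓ)
      / (2 * Real.pi) := by
    rw [← hcc2]; field_simp
  change _ = ((((N2moment ℓ n : ℤ) : ℝ) / _ : ℝ) : ℂ)
  rw [Complex.ofReal_div ((N2moment ℓ n : ℤ) : ℝ), hnm, hfin]
  have hE := Real.exp_pos (Real.pi * Real.sqrt ((n:ℝ) / 2))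
  generalize Real.exp (Real.pi * Real.sqrt ((n:ℝ) / 2)) = E at *
  generalize (∫ v, H (2 * ℓ) t v) = h at *
  generalize AA (t:ℂ) = A at *
  have hreal : (1 / (2 * Real.pi) * Real.sqrt (2 / Real.pi) / ((-1) ^ ℓ * Real.sqrt 2 * Real.pi ^ (2 * ℓ - 2) * B) : ℝ) =
      E * (Real.sqrt (2 / Real.pi) * t ^ 2) / t ^ (2 * ℓ) / (2 * Real.pi) /
        ((-1) ^ ℓ * Real.sqrt 2 * (8 * (n:ℝ)) ^ (ℓ - 1) * B * E) := by
    have hm : (-1 : ℝ) ^ ℓ ≠ 0 := pow_ne_zero _ (by norm_num)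
    have hpp : Real.pi ^ (2 * ℓ - 2) ≠ 0 := pow_ne_zero _ hpi.ne'
    have h8 : (8 * (n:ℝ)) ^ (ℓ - 1) ≠ 0 := by positivity
    have h2' : Real.sqrt 2 ≠ 0 := by positivity
    have htp : t ^ (2 * ℓ) ≠ 0 := by positivity
    generalize Real.sqrt (2 / Real.pi) = r at *
    generalize (8 * (n:ℝ)) ^ (ℓ - 1) = N at *
    generalize t ^ (2 * ℓ) = T' at *
    generalize Real.pi ^ (2 * ℓ - 2) = P at *
    field_simp
    linear_combination r * hpow
  rw [hreal]
  push_cast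
  ring

end N2

/-- The asymptotic `N2_{2ℓ}(n) ∼ (−1)^ℓ √2 (8n)^{ℓ−1} B_{2ℓ}(1/2) exp(π√(n/2))`
as `n → ∞`, for each fixed `ℓ ≥ 1`. -/
theorem N2moment_asymptotic (ℓ : ℕ) (hℓ : 1 ≤ ℓ) :
    Filter.Tendsto
      (fun n : ℕ =>
        (N2moment ℓ n : ℝ) /
          ((-1 : ℝ) ^ ℓ * Real.sqrt 2 * (8 * (n : ℝ)) ^ (ℓ - 1) *
            (((Polynomial.bernoulli (2 * ℓ)).eval (1 / 2 : ℚ) : ℚ) : ℝ) *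
            Real.exp (Real.pi * Real.sqrt ((n : ℝ) / 2))))
      Filter.atTop (nhds 1) := by
  exact N2.main_thm ℓ hℓ
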